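/- Extra vanishing property: assume axiom (C0): there exists a regular dominant ρ' ∈ V₀ such that for every λ ∈ Λ₊ there is a unique p ∈ P^W of degree ℓ(λ) with p(ρ'+μ) = δ_{λμ} for all μ ∈ Λ₊ with ℓ(μ) ≤ ℓ(λ). Let ρ ∈ V₀ be dominant. Then for all λ, μ ∈ Λ₊ with μ − λ ∉ Λ one has p_λ(ρ+μ) = 0. -/

import Mathlib

/-
Common framework for F. Knop, "Construction of Commuting Difference Operators
for Multiplicity Free Spaces".

We identify `Γ` with `ι → ℤ` via its basis `Σ` (so `Σ` is the standard basis),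
`Γ^∨` with `ι → ℤ` via the dual basis `Σ^∨`, and `V = Hom(Γ, ℂ)` with `ι → ℂ`.
-/

open scoped BigOperators Classical
open MvPolynomial

noncomputable section

namespace Knop

variable {ι : Type*} [Fintype ι] [DecidableEq ι]

/-- The `i`-th element of the basis `Σ` of `Γ` (resp. of `Σ^∨ ⊆ Γ^∨`), in coordinates. -/
def e (i : ι) : ι → ℤ := Pi.single i 1

/-- The pairing between `Γ` and `Γ^∨` (in coordinates, the dot product);
`pairZ γ η = γ(η) = η(γ)`. -/
def pairZ (γ η : ι → ℤ) : ℤ := ∑ i, γ i * η i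

/-- Evaluation of `γ ∈ Γ` as a linear function on `V = Hom(Γ,ℂ) ≅ ι → ℂ`. -/
def evalC (γ : ι → ℤ) (z : ι → ℂ) : ℂ := ∑ i, (γ i : ℂ) * z i

/-- The embedding `Γ^∨ ⊆ V`. -/
def toV (η : ι → ℤ) : ι → ℂ := fun i => (η i : ℂ)

/-- The action of `w ∈ Aut(Γ)` on `V = Hom(Γ, ℂ)`: `(w • z)(γ) = z(w⁻¹ γ)`, in coordinates. -/
def actV (w : (ι → ℤ) ≃ₗ[ℤ] (ι → ℤ)) (z : ι → ℂ) : ι → ℂ :=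
  fun i => evalC (w.symm (e i)) z

/-- The action of `w ∈ Aut(Γ)` on `Γ^∨ = Hom(Γ, ℤ)`: `(w • η)(γ) = η(w⁻¹ γ)`. -/
def actDual (w : (ι → ℤ) ≃ₗ[ℤ] (ι → ℤ)) (η : ι → ℤ) : ι → ℤ :=
  fun i => pairZ (w.symm (e i)) η

/-- `Λ₊`, the `ℕ`-span of `Σ^∨` inside `Γ^∨`. -/
def LamPlus : Set (ι → ℤ) := {η | ∀ i, 0 ≤ η i}

/-- The reflection `s_α(x) = x - α^∨(x)·α` attached to a root `α` with coroot `αv`. -/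
def reflMap (α αv : ι → ℤ) : (ι → ℤ) → (ι → ℤ) := fun x => x - pairZ x αv • α

/-- The data `(Γ, Σ, W, ℓ)` together with the axioms C1–C8 of Knop's paper
(in the coordinates given by `Σ`).  The root system `Δ` of `W`, the set
`Φ = W·Σ`, and `Λ₁ = W·Σ^∨₁` are carried along as `Finset`s with their
defining specifications. -/
structure Data (ι : Type*) [Fintype ι] [DecidableEq ι] where
  /-- the reflection group `W ⊆ Aut(Γ)` -/
  W : Subgroup ((ι → ℤ) ≃ₗ[ℤ] (ι → ℤ))
  /-- `W` is finite -/
  W_finite : (W : Set ((ι → ℤ) ≃ₗ[ℤ] (ι → ℤ))).Finite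
  /-- the element `ℓ ∈ Γ` -/
  ell : ι → ℤ
  /-- the set of roots `Δ ⊆ Γ` of `W` -/
  Δ : Finset (ι → ℤ)
  /-- the coroot `α^∨ ∈ Γ^∨` of a root `α` -/
  coroot : (ι → ℤ) → (ι → ℤ)
  /-- `Φ = W·Σ` -/
  Φ : Finset (ι → ℤ)
  /-- `Λ₁ = W·Σ^∨₁` -/
  Λ₁ : Finset (ι → ℤ)
  Φ_spec : ∀ ω, ω ∈ Φ ↔ ∃ w ∈ W, ∃ i, ω = w (e i)
  Λ₁_spec : ∀ η, η ∈ Λ₁ ↔ ∃ w ∈ W, ∃ i, ell i = 1 ∧ η = actDual w (e i)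
  /-- `Δ = -Δ` -/
  Δ_neg : ∀ α ∈ Δ, -α ∈ Δ
  /-- every root is a primitive vector of `Γ` -/
  Δ_prim : ∀ α ∈ Δ, ∀ (n : ℤ) (β : ι → ℤ), α = n • β → IsUnit n
  /-- the reflection `s_α` belongs to `W` -/
  refl_mem : ∀ α ∈ Δ, ∃ w ∈ W, ∀ x, w x = reflMap α (coroot α) x
  /-- `α^∨(α) = 2` -/
  coroot_pair : ∀ α ∈ Δ, pairZ α (coroot α) = 2
  /-- C1: `W` is generated by the reflections `s_α`, `α ∈ Δ` -/
  C1 : W ≤ Subgroup.closure {w : (ι → ℤ) ≃ₗ[ℤ] (ι → ℤ) |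
        ∃ α ∈ Δ, ∀ x, w x = reflMap α (coroot α) x}
  /-- C2: `Δ = Δ⁺ ∪ (-Δ⁺)` -/
  C2 : ∀ α ∈ Δ, (∀ i, 0 ≤ α i) ∨ (∀ i, α i ≤ 0)
  /-- C3: `Φ ⊆ Φ⁺ ∪ (-Φ⁺)` -/
  C3 : ∀ ω ∈ Φ, (∀ i, 0 ≤ ω i) ∨ (∀ i, ω i ≤ 0)
  /-- C4: `ℓ ∈ Γ^W` -/
  C4 : ∀ w ∈ W, w ell = ell
  /-- C5: `Σ_{ω ∈ Φ⁺} ω - Σ_{α ∈ Δ⁺} α = ℓ` -/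
  C5 : (∑ ω ∈ Φ.filter (fun ω => ∀ i, 0 ≤ ω i), ω)
        - (∑ α ∈ Δ.filter (fun α => ∀ i, 0 ≤ α i), α) = ell
  /-- C6: `ℓ(η) > 0` for all `η ∈ Σ^∨` -/
  C6 : ∀ i, 0 < ell i
  /-- C7: `ω(η) ∈ {-1,0,1}` for `η ∈ Σ^∨₁` and `ω ∈ Δ ∪ Φ` -/
  C7 : ∀ i, ell i = 1 → ∀ ω, (ω ∈ Δ ∨ ω ∈ Φ) → ω i = -1 ∨ ω i = 0 ∨ ω i = 1
  /-- C8: a `W`-invariant linear function on `V` is determined by its restriction to `Σ^∨₁` -/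
  C8 : ∀ c c' : ι → ℂ,
    (∀ w ∈ W, ∀ z : ι → ℂ, ∑ i, c i * actV w z i = ∑ i, c i * z i) →
    (∀ w ∈ W, ∀ z : ι → ℂ, ∑ i, c' i * actV w z i = ∑ i, c' i * z i) →
    (∀ i, ell i = 1 → c i = c' i) → c = c'

namespace Data

variable (D : Data ι)

/-- `Δ⁺`, the positive roots. -/
def Δpos : Finset (ι → ℤ) := D.Δ.filter fun α => ∀ i, 0 ≤ α i

/-- `Φ⁺`. -/
def Φpos : Finset (ι → ℤ) := D.Φ.filter fun ω => ∀ i, 0 ≤ ω i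

/-- The submonoid `Λ` of `Γ^∨` generated by `Λ₁`. -/
def Lam : AddSubmonoid (ι → ℤ) := AddSubmonoid.closure (D.Λ₁ : Set (ι → ℤ))

/-- `ρ ∈ V₀`: `ω₁(ρ) = ω₂(ρ)` whenever `ω₁, ω₂ ∈ Σ` lie in the same `±W`-orbit. -/
def InV0 (ρ : ι → ℂ) : Prop :=
  ∀ i j : ι, (∃ w ∈ D.W, e i = w (e j) ∨ e i = -(w (e j))) → ρ i = ρ j

/-- `k` is the multiplicity-parameter function of `ρ ∈ V₀`:
`k_ω = ω₁(ρ)` for any `ω₁ ∈ (±W)·ω ∩ Σ`. -/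
def IsK (ρ : ι → ℂ) (k : (ι → ℤ) → ℂ) : Prop :=
  ∀ (ω : ι → ℤ) (i : ι), (∃ w ∈ D.W, e i = w ω ∨ e i = -(w ω)) → k ω = ρ i

/-- `ρ` is dominant: `α(ρ) ∉ {-1,-2,…}` for all `α ∈ Δ⁺`. -/
def Dominant (ρ : ι → ℂ) : Prop :=
  ∀ α ∈ D.Δpos, ∀ n : ℕ, evalC α ρ ≠ -((n : ℂ) + 1)

/-- `ρ` is regular: `α(ρ) ≠ 0` for all `α ∈ Δ⁺`. -/
def Regular (ρ : ι → ℂ) : Prop :=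
  ∀ α ∈ D.Δpos, evalC α ρ ≠ 0

/-- `ρ` is non-integral: `α(ρ) ∉ ℤ` for all `α ∈ Δ`. -/
def NonIntegral (ρ : ι → ℂ) : Prop :=
  ∀ α ∈ D.Δ, ∀ n : ℤ, evalC α ρ ≠ (n : ℂ)

/-- `ρ` is strongly dominant (`k` being the parameter function of `ρ`). -/
def StronglyDominant (ρ : ι → ℂ) (k : (ι → ℤ) → ℂ) : Prop :=
  D.Regular ρ ∧ D.Dominant ρ ∧
    ∀ ω ∈ D.Φpos, (∀ n : ℕ, evalC ω ρ - k ω ≠ -((n : ℂ) + 1)) ∧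
      (∀ n : ℕ, evalC ω ρ + k ω ≠ -(n : ℂ))

/-- The rational function `f_η`, `η ∈ Λ₁`. -/
def f (k : (ι → ℤ) → ℂ) (η : ι → ℤ) (z : ι → ℂ) : ℂ :=
  (∏ ω ∈ D.Φ.filter (fun ω => 0 < pairZ ω η), (evalC ω z - k ω)) /
  (∏ α ∈ D.Δ.filter (fun α => 0 < pairZ α η), evalC α z)

/-- The value at `z` of `L(p) = Σ_{η ∈ Λ₁} f_η T_η (p)`. -/
def Lval (k : (ι → ℤ) → ℂ) (p : MvPolynomial ι ℂ) (z : ι → ℂ) : ℂ :=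
  ∑ η ∈ D.Λ₁, D.f k η z * eval (z - toV η) p

/-- `W`-invariance of a polynomial function on `V`. -/
def WInv (p : MvPolynomial ι ℂ) : Prop :=
  ∀ w ∈ D.W, ∀ z : ι → ℂ, eval (actV w z) p = eval z p

/-- The defining property of the Capelli polynomial `p_λ` (with shift `ρ`):
`p` is `W`-invariant of degree `≤ ℓ(λ)` and `p(ρ+μ) = δ_{λμ}` for all
`μ ∈ Λ₊` with `ℓ(μ) ≤ ℓ(λ)`. -/
def CapelliAt (ρ : ι → ℂ) (lam : ι → ℤ) (p : MvPolynomial ι ℂ) : Prop :=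
  D.WInv p ∧ (p.totalDegree : ℤ) ≤ pairZ D.ell lam ∧
    ∀ μ : ι → ℤ, μ ∈ LamPlus → pairZ D.ell μ ≤ pairZ D.ell lam →
      eval (ρ + toV μ) p = if μ = lam then 1 else 0

/-- Axiom C0: for some regular dominant `ρ' ∈ V₀` and every `λ ∈ Λ₊` there is a
unique `W`-invariant polynomial of degree `ℓ(λ)` with `p(ρ'+μ) = δ_{λμ}` for all
`μ ∈ Λ₊` with `ℓ(μ) ≤ ℓ(λ)`. -/
def C0 : Prop :=
  ∃ ρ' : ι → ℂ, D.InV0 ρ' ∧ D.Regular ρ' ∧ D.Dominant ρ' ∧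
    ∀ lam : ι → ℤ, lam ∈ LamPlus →
      ∃! p : MvPolynomial ι ℂ, D.WInv p ∧
        p.totalDegree = (pairZ D.ell lam).toNat ∧
        ∀ μ : ι → ℤ, μ ∈ LamPlus → pairZ D.ell μ ≤ pairZ D.ell lam →
          eval (ρ' + toV μ) p = if μ = lam then 1 else 0

end Data

/-- The `m`-th point `τ_m` of the path starting at `lam` with step sequence `s`
(steps are meant to lie in `Λ₁`). -/
def pathPt (lam : ι → ℤ) {d : ℕ} (s : Fin d → ι → ℤ) (m : ℕ) : ι → ℤ :=
  lam + ∑ i ∈ Finset.univ.filter (fun i : Fin d => (i : ℕ) < m), s i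

/-- All paths of length `d` from `lam` to `mu` (with steps in `Λ₁`), encoded by
their step sequences. -/
def paths (D : Data ι) (lam mu : ι → ℤ) (d : ℕ) : Finset (Fin d → ι → ℤ) :=
  (Fintype.piFinset fun _ : Fin d => D.Λ₁).filter fun s => pathPt lam s d = mu

/-- All positive paths of length `d` from `lam` to `mu`. -/
def posPaths (D : Data ι) (lam mu : ι → ℤ) (d : ℕ) : Finset (Fin d → ι → ℤ) :=
  (Fintype.piFinset fun _ : Fin d => D.Λ₁).filter fun s =>
    (∀ m ≤ d, pathPt lam s m ∈ LamPlus) ∧ pathPt lam s d = mu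

/-- The falling factorial `[x ↓ d] = x(x-1)⋯(x-d+1)`. -/
def ffall (x : ℂ) (d : ℤ) : ℂ := ∏ j ∈ Finset.range d.toNat, (x - (j : ℂ))

namespace Data

variable (D : Data ι)

/-- The generalized rational function `f_τ`, `τ ∈ Λ` (formula (Def-f-l)). -/
def fgen (k : (ι → ℤ) → ℂ) (τ : ι → ℤ) (z : ι → ℂ) : ℂ :=
  (∏ ω ∈ D.Φ.filter (fun ω => 0 < pairZ ω τ), ffall (evalC ω z - k ω) (pairZ ω τ)) /
  (∏ α ∈ D.Δ.filter (fun α => 0 < pairZ α τ), ffall (evalC α z) (pairZ α τ))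

/-- The virtual dimension `d_λ = (-1)^{ℓ(λ)} f_λ(-ρ) / f_λ(ρ+λ)`. -/
def vdim (k : (ι → ℤ) → ℂ) (ρ : ι → ℂ) (lam : ι → ℤ) : ℂ :=
  (-1 : ℂ) ^ (pairZ D.ell lam) * D.fgen k lam (-ρ) / D.fgen k lam (ρ + toV lam)

/-- The rational function `b_τ^h` (formula (Def-b-t)); here the sum runs over
all paths from `0` to `τ` of length `d = ℓ(τ)`. -/
def bfun (k : (ι → ℤ) → ℂ) (h : MvPolynomial ι ℂ) (τ : ι → ℤ) (z : ι → ℂ) : ℂ :=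
  ∑ s ∈ paths D 0 τ (pairZ D.ell τ).toNat,
    (∑ i ∈ Finset.range ((pairZ D.ell τ).toNat + 1),
      ((-1 : ℂ) ^ ((pairZ D.ell τ).toNat - i) /
        ((Nat.factorial i : ℂ) * (Nat.factorial ((pairZ D.ell τ).toNat - i) : ℂ))) *
        eval (z - toV (pathPt 0 s i)) h) *
    ∏ i : Fin (pairZ D.ell τ).toNat, D.fgen k (s i) (z - toV (pathPt 0 s (i : ℕ)))

/-- The difference operator `D_h = Σ_{τ ∈ Λ} b_τ^h T_τ`, acting on functions on `V`. -/
def Dop (k : (ι → ℤ) → ℂ) (h : MvPolynomial ι ℂ) (F : (ι → ℂ) → ℂ) (z : ι → ℂ) : ℂ :=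
  ∑ᶠ τ ∈ (D.Lam : Set (ι → ℤ)), D.bfun k h τ z * F (z - toV τ)

/-- The order relation on `Λ`: `τ₁ ≤ τ₂` iff `ℓ(τ₁) < ℓ(τ₂)`, or
`ℓ(τ₁) = ℓ(τ₂)` and `τ₂ - τ₁` is a sum of positive coroots. -/
def ordLe (τ₁ τ₂ : ι → ℤ) : Prop :=
  pairZ D.ell τ₁ < pairZ D.ell τ₂ ∨
    (pairZ D.ell τ₁ = pairZ D.ell τ₂ ∧
      τ₂ - τ₁ ∈ AddSubmonoid.closure (D.coroot '' (D.Δpos : Set (ι → ℤ))))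

end Data

/-!
For generic `ρ` suitable weights `c` turn `L = ∑_{η ∈ Λ₁} c_η f_η T_η` into an operator on invariant
polynomials which raises the degree by at most one and satisfies `L(1) = ℓ(z - ρ)`. Hence
`ℓ(z - ρ) p_λ - L(p_λ)` has degree at most `ℓ(λ)`, and comparing its values at the interpolation
nodes identifies it with `ℓ(λ) p_λ`. Therefore `(ℓ(μ) - ℓ(λ)) p_λ(ρ + μ)` is a combination of the
values `p_λ(ρ + μ - η)`, `η ∈ Λ₁`, and vanishing follows by induction on `ℓ(μ)`.

For arbitrary `ρ`, the shifts `ρ + t • (1, …, 1)` are generic for all but countably many `t`, and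
`p_λ` depends rationally on `t` without a pole at `t = 0`.
-/

section Pairing

variable {κ : Type*}

lemma toV_sub (η η' : κ → ℤ) : toV (η - η') = toV η - toV η' := by
  ext i; simp [toV]

lemma toV_zero : toV (0 : κ → ℤ) = 0 := by
  ext i; simp [toV]

variable [Fintype κ]

lemma evalC_add (γ : κ → ℤ) (z z' : κ → ℂ) : evalC γ (z + z') = evalC γ z + evalC γ z' :=
  dotProduct_add (toV γ) z z'

lemma evalC_sub (γ : κ → ℤ) (z z' : κ → ℂ) : evalC γ (z - z') = evalC γ z - evalC γ z' :=
  dotProduct_sub (toV γ) z z'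

lemma evalC_smul (γ : κ → ℤ) (t : ℂ) (z : κ → ℂ) : evalC γ (t • z) = t * evalC γ z :=
  dotProduct_smul t (toV γ) z

lemma evalC_neg_left (γ : κ → ℤ) (z : κ → ℂ) : evalC (-γ) z = -evalC γ z := by
  simp [evalC]

lemma evalC_sub_zsmul_left (γ β : κ → ℤ) (n : ℤ) (z : κ → ℂ) :
    evalC (γ - n • β) z = evalC γ z - n * evalC β z := by
  simp [evalC, sub_mul, Finset.sum_sub_distrib, Finset.mul_sum, mul_assoc]

lemma evalC_toV (γ η : κ → ℤ) : evalC γ (toV η) = (pairZ γ η : ℂ) := by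
  simp [evalC, toV, pairZ]

lemma evalC_one (γ : κ → ℤ) : evalC γ 1 = ((∑ i, γ i : ℤ) : ℂ) := by
  simp [evalC]

lemma pairZ_sub (γ η η' : κ → ℤ) : pairZ γ (η - η') = pairZ γ η - pairZ γ η' :=
  dotProduct_sub γ η η'

lemma pairZ_neg_left (γ η : κ → ℤ) : pairZ (-γ) η = -pairZ γ η :=
  neg_dotProduct γ η

end Pairing

lemma evalC_e (i : ι) (z : ι → ℂ) : evalC (e i) z = z i := by
  simp [evalC, e, Pi.single_apply]

lemma pairZ_e_left (i : ι) (η : ι → ℤ) : pairZ (e i) η = η i :=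
  single_one_dotProduct i η

lemma pairZ_e (γ : ι → ℤ) (i : ι) : pairZ γ (e i) = γ i :=
  dotProduct_single_one γ i

lemma evalC_actV (γ : ι → ℤ) (w : (ι → ℤ) ≃ₗ[ℤ] (ι → ℤ)) (z : ι → ℂ) :
    evalC γ (actV w z) = evalC (w.symm γ) z := by
  have hγ : w.symm γ = ∑ i, γ i • w.symm (e i) := by
    conv_lhs => rw [pi_eq_sum_univ' γ]
    simp only [map_sum, map_smul]
    rfl
  simp only [hγ, evalC, actV, Finset.sum_apply, Pi.smul_apply, smul_eq_mul, Int.cast_sum,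
    Int.cast_mul, Finset.mul_sum, Finset.sum_mul, mul_assoc]
  exact Finset.sum_comm

lemma toV_actDual (w : (ι → ℤ) ≃ₗ[ℤ] (ι → ℤ)) (η : ι → ℤ) :
    toV (actDual w η) = actV w (toV η) := by
  ext i
  exact (evalC_toV _ _).symm

lemma pairZ_actDual (γ : ι → ℤ) (w : (ι → ℤ) ≃ₗ[ℤ] (ι → ℤ)) (η : ι → ℤ) :
    pairZ γ (actDual w η) = pairZ (w.symm γ) η := by
  have h := evalC_actV γ w (toV η)
  rw [← toV_actDual, evalC_toV, evalC_toV] at h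
  exact_mod_cast h

lemma actV_add (w : (ι → ℤ) ≃ₗ[ℤ] (ι → ℤ)) (z z' : ι → ℂ) :
    actV w (z + z') = actV w z + actV w z' :=
  funext fun _ => evalC_add _ _ _

lemma actV_sub (w : (ι → ℤ) ≃ₗ[ℤ] (ι → ℤ)) (z z' : ι → ℂ) :
    actV w (z - z') = actV w z - actV w z' :=
  funext fun _ => evalC_sub _ _ _

lemma actDual_mul (w w' : (ι → ℤ) ≃ₗ[ℤ] (ι → ℤ)) (η : ι → ℤ) :
    actDual (w * w') η = actDual w (actDual w' η) := by
  ext i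
  simp only [← pairZ_e_left, pairZ_actDual]
  rfl

lemma actDual_one (η : ι → ℤ) : actDual 1 η = η := by
  ext i
  exact pairZ_e_left i η

lemma actDual_inv_self (w : (ι → ℤ) ≃ₗ[ℤ] (ι → ℤ)) (η : ι → ℤ) :
    actDual w⁻¹ (actDual w η) = η := by
  rw [← actDual_mul, inv_mul_cancel, actDual_one]

lemma actDual_self_inv (w : (ι → ℤ) ≃ₗ[ℤ] (ι → ℤ)) (η : ι → ℤ) :
    actDual w (actDual w⁻¹ η) = η := by
  rw [← actDual_mul, mul_inv_cancel, actDual_one]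

section Polynomials

variable {σ K : Type*}

lemma prime_of_totalDegree_eq_one [Field K] {p : MvPolynomial σ K} (hp : p.totalDegree = 1) :
    Prime p := by
  refine (irreducible_of_totalDegree_eq_one hp fun x hx => ?_).prime
  have hp0 : p ≠ 0 := by rintro rfl; simp at hp
  obtain ⟨s, hs⟩ := MvPolynomial.ne_zero_iff.mp hp0
  exact isUnit_iff_ne_zero.mpr fun h0 => hs (zero_dvd_iff.mp (h0 ▸ hx s))

lemma dvd_of_forall_eval_eq_zero [Field K] [IsAlgClosed K] [Finite σ] {p q : MvPolynomial σ K}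
    (hp : Prime p) (h : ∀ z, eval z p = 0 → eval z q = 0) : p ∣ q := by
  have : (Ideal.span {p}).IsPrime := (Ideal.span_singleton_prime hp.ne_zero).mpr hp
  rw [← Ideal.mem_span_singleton, ← IsPrime.vanishingIdeal_zeroLocus (K := K) (Ideal.span {p})]
  intro z hz
  have hzp : eval z p = 0 := by
    rw [← coe_aeval_eq_eval]; exact hz p (Ideal.mem_span_singleton_self p)
  rw [aeval_eq_eval, h z hzp]

lemma eq_of_forall_eval_ne_zero [CommRing K] [IsDomain K] [Infinite K] {d p q : MvPolynomial σ K}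
    (hd : d ≠ 0) (h : ∀ z, eval z d ≠ 0 → eval z p = eval z q) : p = q := by
  refine mul_left_cancel₀ hd (MvPolynomial.funext fun z => ?_)
  rw [map_mul, map_mul]
  by_cases hz : eval z d = 0
  · rw [hz, zero_mul, zero_mul]
  · rw [h z hz]

lemma exists_affine_of_totalDegree_le_one [CommRing K] [Fintype σ] {p : MvPolynomial σ K}
    (hp : p.totalDegree ≤ 1) : ∃ (c : K) (a : σ → K), ∀ z, eval z p = c + ∑ i, a i * z i := by
  have hlin : homogeneousComponent 1 p ∈ Submodule.span K (Set.range (X : σ → MvPolynomial σ K)) :=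
    homogeneousSubmodule_one_eq_span_X (σ := σ) (R := K) ▸ homogeneousComponent_isHomogeneous 1 p
  obtain ⟨a, ha⟩ := (Submodule.mem_span_range_iff_exists_fun K).mp hlin
  have hsum : p = C (coeff 0 p) + ∑ i, a i • X i := by
    rw [ha, ← homogeneousComponent_zero, ← Finset.sum_range_one (homogeneousComponent · p),
      ← Finset.sum_range_succ]
    nth_rw 1 [← sum_homogeneousComponent p]
    refine Finset.sum_subset (Finset.range_mono (by lia)) fun i _ hi => ?_
    exact homogeneousComponent_eq_zero i p (by simpa using hi)
  exact ⟨coeff 0 p, a, fun z => by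
    conv_lhs => rw [hsum]
    simp [smul_eval]⟩

lemma totalDegree_add_eq_or_sub_eq [Field K] [NeZero (2 : K)] {p q : MvPolynomial σ K}
    (h : p.totalDegree ≤ q.totalDegree) :
    (p + q).totalDegree = q.totalDegree ∨ (p - q).totalDegree = q.totalDegree := by
  by_contra! hne
  have hadd := (totalDegree_add p q).trans (max_le h le_rfl) |>.lt_of_ne hne.1
  have hsub := (totalDegree_sub p q).trans (max_le h le_rfl) |>.lt_of_ne hne.2
  have hq : q = (2 : K)⁻¹ • ((p + q) - (p - q)) := by
    rw [add_sub_sub_cancel, ← two_smul K q, smul_smul, inv_mul_cancel₀ two_ne_zero, one_smul]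
  have := calc
    q.totalDegree ≤ ((p + q) - (p - q)).totalDegree := by
      nth_rw 1 [hq]; exact totalDegree_smul_le _ _
    _ ≤ max (p + q).totalDegree (p - q).totalDegree := totalDegree_sub _ _
    _ < q.totalDegree := max_lt hadd hsub
  exact this.false

/-- Clearing denominators in `Q = ∑ a, N a / D a * q a`, where `D a * H a = R`. -/
lemma totalDegree_le_of_mul_eq_sum [CommRing K] [IsDomain K] {α : Type*} {s : Finset α}
    {R Q : MvPolynomial σ K} {N D H q : α → MvPolynomial σ K} {n : ℕ} (hR : R ≠ 0)
    (hDH : ∀ a ∈ s, D a * H a = R) (hN : ∀ a ∈ s, (N a).totalDegree ≤ (D a).totalDegree + 1)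
    (hq : ∀ a ∈ s, q a = 0 ∨ (q a).totalDegree < n) (hQ : R * Q = ∑ a ∈ s, N a * H a * q a) :
    Q.totalDegree ≤ n := by
  rcases eq_or_ne Q 0 with rfl | hQ0
  · simp
  suffices (R * Q).totalDegree ≤ R.totalDegree + n by
    rwa [totalDegree_mul_of_isDomain hR hQ0, add_le_add_iff_left] at this
  rw [hQ]
  refine totalDegree_finsetSum_le fun a ha => ?_
  rcases hq a ha with h0 | hlt
  · simp [h0]
  have hDH0 : D a * H a ≠ 0 := hDH a ha ▸ hR
  have hdeg : R.totalDegree = (D a).totalDegree + (H a).totalDegree := by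
    rw [← hDH a ha, totalDegree_mul_of_isDomain (left_ne_zero_of_mul hDH0)
      (right_ne_zero_of_mul hDH0)]
  have hmul := totalDegree_mul (N a * H a) (q a)
  have hmul' := totalDegree_mul (N a) (H a)
  have := hN a ha
  lia

/-- The translation `p ↦ p(· - v)` of polynomials. -/
def shiftP [CommRing K] (v : σ → K) : MvPolynomial σ K →ₐ[K] MvPolynomial σ K :=
  aeval fun j => X j - C (v j)

lemma eval_shiftP [CommRing K] (v z : σ → K) (p : MvPolynomial σ K) :
    eval z (shiftP v p) = eval (z - v) p := by
  have hcomp : (eval z).comp (shiftP v : MvPolynomial σ K →+* MvPolynomial σ K) =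
      eval (z - v) := by
    ext <;> simp [shiftP]
  exact congr($hcomp p)

/-- The polynomials of total degree less than `n`, a submodule also for `n = 0`. -/
def degreeLT (σ K : Type*) [CommRing K] (n : ℕ) : Submodule K (MvPolynomial σ K) :=
  restrictSupport K {s | s.degree < n}

lemma mem_degreeLT_iff [CommRing K] {n : ℕ} {p : MvPolynomial σ K} :
    p ∈ degreeLT σ K n ↔ p = 0 ∨ p.totalDegree < n := by
  rcases eq_or_ne p 0 with rfl | hp
  · simp
  obtain ⟨s, hs⟩ := support_nonempty.mpr hp
  simp only [hp, false_or, degreeLT, mem_restrictSupport_iff, Set.subset_def, Finset.mem_coe,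
    Set.mem_ofPred_eq]
  refine ⟨fun h => ?_, fun h t ht => (le_totalDegree ht).trans_lt h⟩
  exact (Finset.sup_lt_iff ((Nat.zero_le _).trans_lt (h s hs))).mpr h

lemma sub_shiftP_mem_degreeLT_mul_X [CommRing K] [IsDomain K] (v : σ → K)
    {p : MvPolynomial σ K} (hp : p - shiftP v p ∈ degreeLT σ K p.totalDegree) (i : σ) :
    p * X i - shiftP v (p * X i) ∈ degreeLT σ K (p * X i).totalDegree := by
  rcases eq_or_ne p 0 with rfl | hp0
  · simp
  have hdeg : (p * X i).totalDegree = p.totalDegree + 1 := by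
    rw [totalDegree_mul_of_isDomain hp0 (X_ne_zero i), totalDegree_X]
  have hmul : (p - shiftP v p) * X i ∈ degreeLT σ K (p.totalDegree + 1) := by
    rcases mem_degreeLT_iff.mp hp with h0 | hlt
    · simp [h0]
    · have := totalDegree_mul (p - shiftP v p) (X i)
      rw [totalDegree_X] at this
      exact mem_degreeLT_iff.mpr (.inr (by lia))
  have hshift : shiftP v p ∈ degreeLT σ K (p.totalDegree + 1) := by
    have hmono : degreeLT σ K p.totalDegree ≤ degreeLT σ K (p.totalDegree + 1) :=
      restrictSupport_mono K fun s hs => Nat.lt_succ_of_lt hs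
    rw [← sub_sub_cancel p (shiftP v p)]
    exact sub_mem (mem_degreeLT_iff.mpr (.inr (Nat.lt_succ_self _))) (hmono hp)
  have hexpand : p * X i - shiftP v (p * X i) = (p - shiftP v p) * X i + v i • shiftP v p := by
    have hX : shiftP v (X i) = X i - C (v i) := by simp [shiftP]
    rw [map_mul, hX, smul_eq_C_mul]
    ring
  rw [hexpand, hdeg]
  exact add_mem hmul (Submodule.smul_mem _ _ hshift)

lemma sub_shiftP_mem_degreeLT [CommRing K] [IsDomain K] (v : σ → K) (p : MvPolynomial σ K) :
    p - shiftP v p ∈ degreeLT σ K p.totalDegree := by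
  have hmonomial (s : σ →₀ ℕ) (a : K) :
      monomial s a - shiftP v (monomial s a) ∈ degreeLT σ K (monomial s a).totalDegree :=
    induction_on_monomial (motive := fun q => q - shiftP v q ∈ degreeLT σ K q.totalDegree)
      (fun a => by simp [shiftP]) (fun q i hq => sub_shiftP_mem_degreeLT_mul_X v hq i) s a
  have hsum : p - shiftP v p =
      ∑ s ∈ p.support, (monomial s (coeff s p) - shiftP v (monomial s (coeff s p))) := by
    rw [Finset.sum_sub_distrib, ← map_sum, ← p.as_sum]
  rw [hsum]
  refine sum_mem fun s hs => restrictSupport_mono K (fun t ht => ?_) (hmonomial s (coeff s p))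
  exact ht.trans_le ((totalDegree_monomial_le s _).trans (le_totalDegree hs))

end Polynomials

lemma eq_or_eq_neg_of_zsmul_eq_zsmul {M : Type*} [AddCommGroup M] [Module.IsTorsionFree ℤ M]
    {β γ : M} (hβ : ∀ (n : ℤ) (δ : M), β = n • δ → IsUnit n)
    (hγ : ∀ (n : ℤ) (δ : M), γ = n • δ → IsUnit n) {a b : ℤ} (hb : b ≠ 0) (h : a • γ = b • β) :
    γ = β ∨ γ = -β := by
  obtain ⟨g, a', b', hg, hcop, rfl, rfl⟩ := Int.exists_gcd_one' (Int.gcd_pos_of_ne_zero_right a hb)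
  have hg0 : (g : ℤ) ≠ 0 := by exact_mod_cast hg.ne'
  have h' : a' • γ = b' • β := by
    rw [mul_comm a', mul_comm b', mul_smul, mul_smul] at h
    exact smul_right_injective M hg0 h
  obtain ⟨u, v, huv⟩ := Int.isCoprime_iff_gcd_eq_one.mpr hcop
  have hγδ : γ = b' • (u • β + v • γ) := by
    rw [smul_add, smul_comm b' u, ← h', smul_smul, smul_smul, ← add_smul, mul_comm b' v, huv,
      one_smul]
  have hβδ : β = a' • (u • β + v • γ) := by
    rw [smul_add, smul_comm a' v, h', smul_smul, smul_smul, ← add_smul, mul_comm a' u, huv,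
      one_smul]
  generalize u • β + v • γ = δ at hγδ hβδ
  rcases Int.isUnit_iff.mp (hγ _ _ hγδ) with rfl | rfl <;>
    rcases Int.isUnit_iff.mp (hβ _ _ hβδ) with rfl | rfl <;> simp_all

section Specialization

open Filter

instance countableInterFilter_cocountable {α : Type*} :
    CountableInterFilter (cocountable : Filter α) :=
  CardinalInterFilter.toCountableInterFilter cocountable Cardinal.aleph0_lt_aleph_one

lemma infinite_of_eventually_cocountable {α : Type*} [Uncountable α] {P : α → Prop}
    (h : ∀ᶠ t in cocountable, P t) : {t | P t}.Infinite := fun hfin =>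
  Set.not_countable_univ <|
    (Set.union_compl_self {t | P t}) ▸ hfin.countable.union (mem_cocountable.mp h)

lemma eventually_eval_ne_zero {K : Type*} [CommRing K] [IsDomain K] {q : Polynomial K}
    (hq : q ≠ 0) : ∀ᶠ t in cocountable, q.eval t ≠ 0 :=
  mem_cocountable.mpr <| (Polynomial.finite_setOfPred_isRoot hq).countable.mono fun _ => not_not.mp

lemma eventually_add_mul_ne_zero {K : Type*} [CommRing K] [IsDomain K] {a b : K}
    (h : b = 0 → a ≠ 0) : ∀ᶠ t in cocountable, a + t * b ≠ 0 := by
  have hq : Polynomial.C a + Polynomial.X * Polynomial.C b ≠ 0 := fun h0 => by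
    have ha : a = 0 := by simpa using congr(Polynomial.eval 0 $h0)
    have hab : a + b = 0 := by simpa using congr(Polynomial.eval 1 $h0)
    exact h (by rwa [ha, zero_add] at hab) ha
  simpa [mul_comm b] using eventually_eval_ne_zero hq

/-- The restriction of a polynomial to the line `t ↦ z + t • v`. -/
def lineP {σ K : Type*} [CommRing K] (z v : σ → K) (p : MvPolynomial σ K) : Polynomial K :=
  aeval (fun i => Polynomial.C (z i) + Polynomial.X * Polynomial.C (v i)) p

lemma eval_lineP {σ K : Type*} [CommRing K] (z v : σ → K) (p : MvPolynomial σ K) (t : K) :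
    (lineP z v p).eval t = eval (z + t • v) p := by
  have hcomp : (Polynomial.evalRingHom t).comp (aeval fun i => Polynomial.C (z i) +
      Polynomial.X * Polynomial.C (v i) : MvPolynomial σ K →ₐ[K] Polynomial K).toRingHom =
      eval (z + t • v) := by
    ext i
    · simp
    · simp [mul_comm (v i)]
  exact congr($hcomp p)

section Matrix

open Matrix

variable {K n : Type*} [Field K] [Fintype n] [DecidableEq n] {A : Matrix n n (Polynomial K)}
  {ψ : n → Polynomial K} {f x : n → K}

lemma eval_det_eq (A : Matrix n n (Polynomial K)) (t : K) :
    A.det.eval t = (A.map (Polynomial.eval t)).det :=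
  RingHom.map_det (Polynomial.evalRingHom t) A

lemma eval_dotProduct_adjugate_mulVec {t : K} (hx : A.map (Polynomial.eval t) *ᵥ x = f) :
    (ψ ⬝ᵥ (A.adjugate *ᵥ (Polynomial.C ∘ f))).eval t =
      A.det.eval t * ((Polynomial.eval t ∘ ψ) ⬝ᵥ x) := by
  have hadj : A.adjugate.map (Polynomial.eval t) = (A.map (Polynomial.eval t)).adjugate :=
    RingHom.map_adjugate (Polynomial.evalRingHom t) A
  have hvec : Polynomial.eval t ∘ (A.adjugate *ᵥ (Polynomial.C ∘ f)) = A.det.eval t • x := by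
    ext i
    refine (RingHom.map_mulVec (Polynomial.evalRingHom t) _ _ i).trans ?_
    have hf : Polynomial.evalRingHom t ∘ Polynomial.C ∘ f = f := by ext; simp
    rw [hf, Polynomial.coe_evalRingHom, hadj, ← hx, mulVec_mulVec, adjugate_mul, eval_det_eq,
      smul_mulVec, one_mulVec]
  rw [← Polynomial.coe_evalRingHom, RingHom.map_dotProduct, Polynomial.coe_evalRingHom,
    hvec, dotProduct_smul, smul_eq_mul]

lemma dotProduct_eq_zero_of_infinite {S : Set K} (hS : S.Infinite)
    (hψ : ∀ t ∈ S, ∀ x, A.map (Polynomial.eval t) *ᵥ x = f → (Polynomial.eval t ∘ ψ) ⬝ᵥ x = 0)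
    {t₀ : K} (ht₀ : A.det.eval t₀ ≠ 0) (hx : A.map (Polynomial.eval t₀) *ᵥ x = f) :
    (Polynomial.eval t₀ ∘ ψ) ⬝ᵥ x = 0 := by
  set P := ψ ⬝ᵥ (A.adjugate *ᵥ (Polynomial.C ∘ f))
  have hzero : P * A.det = 0 := by
    refine Polynomial.eq_zero_of_infinite_isRoot _ (hS.mono fun t ht => ?_)
    rw [Set.mem_ofPred_eq, Polynomial.IsRoot, Polynomial.eval_mul]
    by_cases hAt : A.det.eval t = 0
    · rw [hAt, mul_zero]
    have hunit : IsUnit (A.map (Polynomial.eval t)) :=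
      (isUnit_iff_isUnit_det _).mpr (isUnit_iff_ne_zero.mpr (eval_det_eq A t ▸ hAt))
    obtain ⟨y, hy⟩ := mulVec_surjective_iff_isUnit.mpr hunit f
    rw [eval_dotProduct_adjugate_mulVec hy, hψ t ht y hy, mul_zero, zero_mul]
  have hP : P = 0 :=
    (mul_eq_zero.mp hzero).resolve_right fun h0 => ht₀ (by rw [h0, Polynomial.eval_zero])
  have hcramer : P.eval t₀ = A.det.eval t₀ * _ := eval_dotProduct_adjugate_mulVec hx
  rw [hP, Polynomial.eval_zero] at hcramer
  exact (mul_eq_zero.mp hcramer.symm).resolve_left ht₀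

end Matrix

end Specialization

/-- Descending induction on `h a`: a function as in `hS` agrees with `Pi.single a 1` up to
coordinates of larger height. -/
lemma eq_top_of_triangular {K α β : Type*} [CommRing K] [Finite α] [DecidableEq α] [LinearOrder β]
    {S : Submodule K (α → K)} (h : α → β)
    (hS : ∀ a, ∃ f ∈ S, ∀ b, h b ≤ h a → f b = if b = a then 1 else 0) : S = ⊤ := by
  cases nonempty_fintype α
  have hwf : WellFounded fun b a => h a < h b :=
    have : IsTrans α fun b a => h a < h b := ⟨fun _ _ _ hab hbc => hbc.trans hab⟩
    have : Std.Irrefl fun b a : α => h a < h b := ⟨fun _ => lt_irrefl _⟩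
    Finite.wellFounded_of_trans_of_irrefl _
  have hsingle (a : α) : Pi.single a 1 ∈ S := by
    induction a using hwf.induction with
    | _ a ih =>
      obtain ⟨f, hf, hfa⟩ := hS a
      refine (Submodule.sub_mem_iff_right S hf).mp ?_
      rw [pi_eq_sum_univ' (f - Pi.single a 1)]
      refine Submodule.sum_mem S fun b _ => ?_
      rcases le_or_gt (h b) (h a) with hle | hlt
      · rw [Pi.sub_apply, hfa b hle, Pi.single_apply, sub_self, zero_smul]
        exact zero_mem S
      · exact S.smul_mem _ (ih b hlt)
  refine Submodule.eq_top_iff'.mpr fun f => ?_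
  rw [pi_eq_sum_univ' f]
  exact Submodule.sum_mem S fun a _ => S.smul_mem _ (hsingle a)

section LinearForms

variable {κ : Type*} [Fintype κ]

/-- The element `γ` of `Γ` as a polynomial function on `V`. -/
def linP (γ : κ → ℤ) : MvPolynomial κ ℂ := ∑ i, C (γ i : ℂ) * X i

lemma eval_linP (γ : κ → ℤ) (z : κ → ℂ) : eval z (linP γ) = evalC γ z := by
  simp [linP, evalC]

lemma linP_neg (γ : κ → ℤ) : linP (-γ) = -linP γ := by
  simp [linP]

lemma linP_ne_zero {γ : κ → ℤ} (hγ : γ ≠ 0) : linP γ ≠ 0 := by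
  classical
  intro h0
  refine hγ (funext fun i => ?_)
  have h := congr(eval (toV (e i)) $h0)
  rw [eval_linP, evalC_toV, pairZ_e, map_zero] at h
  exact_mod_cast h

lemma isHomogeneous_linP (γ : κ → ℤ) : (linP γ).IsHomogeneous 1 :=
  IsHomogeneous.sum _ _ _ fun i _ => isHomogeneous_C_mul_X _ i

lemma prime_linP {γ : κ → ℤ} (hγ : γ ≠ 0) : Prime (linP γ) :=
  prime_of_totalDegree_eq_one ((isHomogeneous_linP γ).totalDegree (linP_ne_zero hγ))

/-- Evaluate at the point `γ i • e j - γ j • e i` of the hyperplane `γ = 0`. -/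
lemma zsmul_eq_zsmul_of_linP_dvd {γ β : κ → ℤ} (h : linP γ ∣ linP β) (i : κ) :
    γ i • β = β i • γ := by
  classical
  obtain ⟨q, hq⟩ := h
  ext j
  have heval (δ : κ → ℤ) : eval (toV (γ i • e j - γ j • e i)) (linP δ) =
      ((γ i * δ j - γ j * δ i : ℤ) : ℂ) := by
    rw [eval_linP, evalC_toV, pairZ_sub]
    have hsmul (n : ℤ) (l : κ) : pairZ δ (n • e l) = n * δ l :=
      (dotProduct_smul n δ (e l)).trans congr(n * $(pairZ_e δ l))
    rw [hsmul, hsmul]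
  have hz := congr(eval (toV (γ i • e j - γ j • e i)) $hq)
  rw [map_mul, heval, heval, mul_comm (γ i) (γ j), sub_self, Int.cast_zero, zero_mul] at hz
  have : γ i * β j - γ j * β i = 0 := by exact_mod_cast hz
  simp only [Pi.smul_apply, smul_eq_mul]
  linear_combination this

end LinearForms

/-- The substitution `p ↦ p ∘ w` for `w ∈ Aut(Γ)` acting on `V`. -/
def actP (w : (ι → ℤ) ≃ₗ[ℤ] (ι → ℤ)) : MvPolynomial ι ℂ →ₐ[ℂ] MvPolynomial ι ℂ :=
  aeval fun j => linP (w.symm (e j))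

lemma eval_actP (w : (ι → ℤ) ≃ₗ[ℤ] (ι → ℤ)) (z : ι → ℂ) (p : MvPolynomial ι ℂ) :
    eval z (actP w p) = eval (actV w z) p := by
  have hcomp : (eval z).comp (actP w : MvPolynomial ι ℂ →+* MvPolynomial ι ℂ) =
      eval (actV w z) := by
    ext <;> simp [actP, eval_linP, actV]
  exact congr($hcomp p)

namespace Data

variable (D : Data ι)

/-- The `W`-orbit of `Δ`. The axioms do not require `Δ` itself to be `W`-stable; replacing it by
its orbit makes `W`-equivariance available without changing the set of reflections. -/
def roots : Finset (ι → ℤ) :=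
  (D.W_finite.toFinset ×ˢ D.Δ).image fun x => x.1 x.2

variable {D} {β γ : ι → ℤ}

lemma mem_roots_iff : β ∈ D.roots ↔ ∃ w ∈ D.W, ∃ α ∈ D.Δ, w α = β := by
  simp [roots, and_assoc]

lemma apply_mem_roots {w : (ι → ℤ) ≃ₗ[ℤ] (ι → ℤ)} (hw : w ∈ D.W) (hβ : β ∈ D.roots) :
    w β ∈ D.roots := by
  obtain ⟨v, hv, α, hα, rfl⟩ := mem_roots_iff.mp hβ
  exact mem_roots_iff.mpr ⟨w * v, mul_mem hw hv, α, hα, rfl⟩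

lemma Δ_subset_roots : D.Δ ⊆ D.roots :=
  fun α hα => mem_roots_iff.mpr ⟨1, one_mem _, α, hα, rfl⟩

lemma neg_mem_roots (hβ : β ∈ D.roots) : -β ∈ D.roots := by
  obtain ⟨v, hv, α, hα, rfl⟩ := mem_roots_iff.mp hβ
  exact mem_roots_iff.mpr ⟨v, hv, -α, D.Δ_neg α hα, map_neg v α⟩

lemma isUnit_of_eq_zsmul_of_mem_roots (hβ : β ∈ D.roots) (n : ℤ) (δ : ι → ℤ) (h : β = n • δ) :
    IsUnit n := by
  obtain ⟨v, -, α, hα, rfl⟩ := mem_roots_iff.mp hβ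
  refine D.Δ_prim α hα n (v.symm δ) ?_
  rw [← map_smul, ← h, LinearEquiv.symm_apply_apply]

lemma ne_zero_of_mem_roots (hβ : β ∈ D.roots) : β ≠ 0 := by
  rintro rfl
  exact not_isUnit_zero (isUnit_of_eq_zsmul_of_mem_roots hβ 0 0 (zero_smul ℤ 0).symm)

lemma ne_neg_of_mem_roots (hβ : β ∈ D.roots) : β ≠ -β :=
  fun h => ne_zero_of_mem_roots hβ (self_eq_neg.mp h)

lemma exists_reflection (hβ : β ∈ D.roots) :
    ∃ s ∈ D.W, ∃ c, pairZ β c = 2 ∧ ∀ x, s.symm x = x - pairZ x c • β := by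
  obtain ⟨v, hv, α, hα, rfl⟩ := mem_roots_iff.mp hβ
  obtain ⟨r, hr, hrx⟩ := D.refl_mem α hα
  refine ⟨(v * r * v⁻¹)⁻¹, inv_mem (mul_mem (mul_mem hv hr) (inv_mem hv)),
    actDual v (D.coroot α), ?_, fun x => ?_⟩
  · rw [pairZ_actDual, LinearEquiv.symm_apply_apply, D.coroot_pair α hα]
  · change v (r (v.symm x)) = _
    rw [hrx, reflMap, map_sub, map_smul, LinearEquiv.apply_symm_apply, pairZ_actDual]

lemma eq_or_eq_neg_of_linP_dvd (hγ : γ ∈ D.roots) (hβ : β ∈ D.roots) (h : linP γ ∣ linP β) :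
    γ = β ∨ γ = -β := by
  obtain ⟨i, hi⟩ := Function.ne_iff.mp (ne_zero_of_mem_roots hγ)
  exact eq_or_eq_neg_of_zsmul_eq_zsmul (isUnit_of_eq_zsmul_of_mem_roots hβ)
    (isUnit_of_eq_zsmul_of_mem_roots hγ) hi (zsmul_eq_zsmul_of_linP_dvd h i).symm

/-- The cofactor of `β` is anti-invariant under the reflection, hence vanishes on its mirror. -/
lemma WInv.sq_linP_dvd {G : MvPolynomial ι ℂ} (hG : D.WInv G) (hβ : β ∈ D.roots)
    (h : linP β ∣ G) : linP β ^ 2 ∣ G := by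
  obtain ⟨s, hs, c, hc, hsx⟩ := exists_reflection hβ
  obtain ⟨G', rfl⟩ := h
  have hβ0 := ne_zero_of_mem_roots hβ
  have hanti : actP s G' = -G' := by
    refine eq_of_forall_eval_ne_zero (linP_ne_zero hβ0) fun z hz => mul_left_cancel₀ hz ?_
    have hinv := hG s hs z
    have hneg : s.symm β = -β := by rw [hsx, hc]; module
    rw [map_mul, map_mul, eval_linP, eval_linP, evalC_actV, hneg, evalC_neg_left] at hinv
    rw [eval_actP, map_neg, eval_linP]
    linear_combination -hinv
  rw [pow_two]
  refine mul_dvd_mul_left _ (dvd_of_forall_eval_eq_zero (prime_linP hβ0) fun z hz => ?_)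
  have hfix : actV s z = z := by
    ext i
    rw [actV, hsx, evalC_sub_zsmul_left, ← eval_linP β, hz, mul_zero, sub_zero, evalC_e]
  have := congr(eval z $hanti)
  rw [eval_actP, hfix, map_neg] at this
  exact self_eq_neg.mp this

lemma prod_linP_dvd {G : MvPolynomial ι ℂ} (T : Finset (ι → ℤ)) (hT : T ⊆ D.roots)
    (hneg : ∀ β ∈ T, -β ∈ T) (hG : ∀ β ∈ T, linP β ^ 2 ∣ G) : ∏ β ∈ T, linP β ∣ G := by
  induction T using Finset.strongInduction with
  | H T ih =>
    rcases T.eq_empty_or_nonempty with rfl | ⟨β, hβ⟩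
    · simp
    set T' := (T.erase β).erase (-β) with hT'
    have hnegβ : -β ∈ T.erase β :=
      Finset.mem_erase.mpr ⟨(ne_neg_of_mem_roots (hT hβ)).symm, hneg β hβ⟩
    have hT'T : T' ⊆ T := (Finset.erase_subset _ _).trans (Finset.erase_subset _ _)
    have hdvd : ∏ γ ∈ T', linP γ ∣ G := by
      refine ih T' ?_ (hT'T.trans hT) (fun γ hγ => ?_) fun γ hγ => hG γ (hT'T hγ)
      · exact (Finset.erase_ssubset hnegβ).trans (Finset.erase_ssubset hβ)
      · simp only [hT', Finset.mem_erase, ne_eq, neg_inj] at hγ ⊢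
        exact ⟨hγ.2.1, fun h => hγ.1 (neg_eq_iff_eq_neg.mp h), hneg γ hγ.2.2⟩
    have hcop : IsRelPrime (linP β ^ 2) (∏ γ ∈ T', linP γ) := by
      refine IsRelPrime.pow_left (IsRelPrime.prod_right fun γ hγ => ?_)
      have hirr := (prime_linP (ne_zero_of_mem_roots (hT hβ))).irreducible
      refine hirr.isRelPrime_iff_not_dvd.mpr fun h => ?_
      simp only [hT', Finset.mem_erase] at hγ
      rcases eq_or_eq_neg_of_linP_dvd (hT hβ) (hT hγ.2.2) h with rfl | rfl
      · exact hγ.2.1 rfl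
      · exact hγ.1 (neg_neg γ).symm
    have hprod : ∏ γ ∈ T, linP γ = -(linP β ^ 2 * ∏ γ ∈ T', linP γ) := by
      rw [← Finset.mul_prod_erase T linP hβ, ← Finset.mul_prod_erase _ linP hnegβ, linP_neg]
      ring
    rw [hprod, neg_dvd]
    exact hcop.mul_dvd (hG β hβ) hdvd

end Data

namespace Data

variable (D : Data ι)

/-- `z` avoids all mirrors of `W`, i.e. all poles of the difference operators below. -/
def OffMirrors (z : ι → ℂ) : Prop := ∀ β ∈ D.roots, evalC β z ≠ 0

/-- The product of all roots, a common denominator of the difference operators below. -/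
def disc : MvPolynomial ι ℂ := ∏ β ∈ D.roots, linP β

/-- The denominator of the coefficient of `T_η`. -/
def den (η : ι → ℤ) : MvPolynomial ι ℂ := ∏ β ∈ D.roots with 0 < pairZ β η, linP β

/-- The complementary factor of `den η` in `disc`. -/
def codisc (η : ι → ℤ) : MvPolynomial ι ℂ := ∏ β ∈ D.roots with ¬0 < pairZ β η, linP β

/-- The numerator of the coefficient of `T_η`. -/
def num (k : (ι → ℤ) → ℂ) (η : ι → ℤ) : MvPolynomial ι ℂ :=
  ∏ ω ∈ D.Φ with 0 < pairZ ω η, (linP ω - C (k ω))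

/-- The value at `z` of `∑_{η ∈ Λ₁} c_η f_η T_η (p)`, a version of the operator `L` weighted by
`c`. -/
def opVal (k c : (ι → ℤ) → ℂ) (p : MvPolynomial ι ℂ) (z : ι → ℂ) : ℂ :=
  ∑ η ∈ D.Λ₁, c η * (eval z (D.num k η) / eval z (D.den η)) * eval (z - toV η) p

/-- The polynomial `Q` represents the image of `p` under the operator `opVal`. -/
def IsOpImage (k c : (ι → ℤ) → ℂ) (p Q : MvPolynomial ι ℂ) : Prop :=
  ∀ z, D.OffMirrors z → eval z Q = D.opVal k c p z

/-- `W`-invariance of a function on `Φ`. -/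
def ΦInv (k : (ι → ℤ) → ℂ) : Prop := ∀ w ∈ D.W, ∀ ω ∈ D.Φ, k (w ω) = k ω

/-- `W`-invariance of a function on `Λ₁`. -/
def Λ₁Inv (c : (ι → ℤ) → ℂ) : Prop := ∀ w ∈ D.W, ∀ η ∈ D.Λ₁, c (actDual w η) = c η

variable {D} {k c : (ι → ℤ) → ℂ} {p Q : MvPolynomial ι ℂ} {w : (ι → ℤ) ≃ₗ[ℤ] (ι → ℤ)}
  {z : ι → ℂ} {η : ι → ℤ}

lemma apply_mem_Φ (hw : w ∈ D.W) {ω : ι → ℤ} (hω : ω ∈ D.Φ) : w ω ∈ D.Φ := by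
  obtain ⟨v, hv, i, rfl⟩ := (D.Φ_spec ω).mp hω
  exact (D.Φ_spec _).mpr ⟨w * v, mul_mem hw hv, i, rfl⟩

lemma e_mem_Φ (i : ι) : e i ∈ D.Φ :=
  (D.Φ_spec _).mpr ⟨1, one_mem _, i, rfl⟩

lemma actDual_mem_Λ₁ (hw : w ∈ D.W) (hη : η ∈ D.Λ₁) : actDual w η ∈ D.Λ₁ := by
  obtain ⟨v, hv, i, hi, rfl⟩ := (D.Λ₁_spec η).mp hη
  exact (D.Λ₁_spec _).mpr ⟨w * v, mul_mem hw hv, i, hi, (actDual_mul w v (e i)).symm⟩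

lemma e_mem_Λ₁ {i : ι} (hi : D.ell i = 1) : e i ∈ D.Λ₁ :=
  (D.Λ₁_spec _).mpr ⟨1, one_mem _, i, hi, (actDual_one _).symm⟩

lemma prod_filter_pairZ_actDual {M : Type*} [CommMonoid M] {A : Finset (ι → ℤ)}
    (hA : ∀ v ∈ D.W, ∀ ω ∈ A, v ω ∈ A) (hw : w ∈ D.W) (F : (ι → ℤ) → M) :
    ∏ ω ∈ A with 0 < pairZ ω (actDual w η), F ω = ∏ ω ∈ A with 0 < pairZ ω η, F (w ω) := by
  simp only [pairZ_actDual]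
  refine Finset.prod_nbij' w.symm w ?_ ?_ (by simp) (by simp) (by simp)
  · intro ω hω
    rw [Finset.mem_filter] at hω ⊢
    exact ⟨hA _ (inv_mem hw) ω hω.1, hω.2⟩
  · intro ω hω
    rw [Finset.mem_filter] at hω ⊢
    exact ⟨hA w hw ω hω.1, by rw [LinearEquiv.symm_apply_apply]; exact hω.2⟩

lemma evalC_apply_actV (ω : ι → ℤ) : evalC (w ω) (actV w z) = evalC ω z := by
  rw [evalC_actV, LinearEquiv.symm_apply_apply]

lemma eval_num_actV (hk : D.ΦInv k) (hw : w ∈ D.W) :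
    eval (actV w z) (D.num k (actDual w η)) = eval z (D.num k η) := by
  simp only [num, map_prod, map_sub, eval_linP, eval_C]
  rw [prod_filter_pairZ_actDual (fun v hv ω hω => apply_mem_Φ hv hω) hw]
  refine Finset.prod_congr rfl fun ω hω => ?_
  rw [evalC_apply_actV, hk w hw ω (Finset.mem_filter.mp hω).1]

lemma eval_den_actV (hw : w ∈ D.W) :
    eval (actV w z) (D.den (actDual w η)) = eval z (D.den η) := by
  simp only [den, map_prod, eval_linP]
  rw [prod_filter_pairZ_actDual (fun v hv ω hω => apply_mem_roots hv hω) hw]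
  exact Finset.prod_congr rfl fun ω _ => evalC_apply_actV ω

lemma eval_disc_actV (hw : w ∈ D.W) : eval (actV w z) D.disc = eval z D.disc := by
  simp only [disc, map_prod, eval_linP]
  refine Finset.prod_nbij' w.symm w (fun β hβ => apply_mem_roots (inv_mem hw) hβ)
    (fun β hβ => apply_mem_roots hw hβ) (by simp) (by simp) fun β _ => evalC_actV β w z

lemma sum_Λ₁_actDual (hw : w ∈ D.W) (F : (ι → ℤ) → ℂ) :
    ∑ η ∈ D.Λ₁, F (actDual w η) = ∑ η ∈ D.Λ₁, F η :=
  Finset.sum_nbij' (actDual w) (actDual w⁻¹) (fun _ hη => actDual_mem_Λ₁ hw hη)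
    (fun _ hη => actDual_mem_Λ₁ (inv_mem hw) hη) (fun η _ => actDual_inv_self w η)
    (fun η _ => actDual_self_inv w η) fun _ _ => rfl

lemma opVal_actV (hk : D.ΦInv k) (hc : D.Λ₁Inv c) (hp : D.WInv p) (hw : w ∈ D.W) :
    D.opVal k c p (actV w z) = D.opVal k c p z := by
  rw [opVal, ← sum_Λ₁_actDual hw]
  refine Finset.sum_congr rfl fun η hη => ?_
  rw [hc w hw η hη, eval_num_actV hk hw, eval_den_actV hw, toV_actDual, ← actV_sub, hp w hw]

lemma disc_ne_zero : D.disc ≠ 0 :=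
  Finset.prod_ne_zero_iff.mpr fun _ hβ => linP_ne_zero (ne_zero_of_mem_roots hβ)

lemma offMirrors_iff : D.OffMirrors z ↔ eval z D.disc ≠ 0 := by
  simp only [disc, map_prod, eval_linP, Finset.prod_ne_zero_iff, OffMirrors]

lemma OffMirrors.actV (hz : D.OffMirrors z) (hw : w ∈ D.W) : D.OffMirrors (actV w z) := by
  rw [offMirrors_iff, eval_disc_actV hw]
  exact offMirrors_iff.mp hz

lemma eq_of_forall_offMirrors (h : ∀ z, D.OffMirrors z → eval z p = eval z Q) : p = Q :=
  eq_of_forall_eval_ne_zero D.disc_ne_zero fun z hz => h z (offMirrors_iff.mpr hz)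

lemma wInv_of_forall_offMirrors
    (h : ∀ w ∈ D.W, ∀ z, D.OffMirrors z → eval (Knop.actV w z) p = eval z p) : D.WInv p := by
  intro w hw z
  have hactP : actP w p = p :=
    eq_of_forall_offMirrors fun z hz => (eval_actP w z p).trans (h w hw z hz)
  rw [← eval_actP, hactP]

lemma den_mul_codisc (η : ι → ℤ) : D.den η * D.codisc η = D.disc :=
  Finset.prod_filter_mul_prod_filter_not ..

lemma linP_dvd_codisc {β : ι → ℤ} (hβ : β ∈ D.roots) (η : ι → ℤ) : linP β ∣ D.codisc η := by
  by_cases h : 0 < pairZ β η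
  · rw [← neg_neg β, linP_neg, neg_dvd]
    refine Finset.dvd_prod_of_mem linP (Finset.mem_filter.mpr ⟨neg_mem_roots hβ, ?_⟩)
    rw [pairZ_neg_left]
    lia
  · exact Finset.dvd_prod_of_mem linP (Finset.mem_filter.mpr ⟨hβ, h⟩)

variable (D k c p) in
/-- The image of `p` under the operator `opVal`, multiplied by `disc`. -/
def discMulOp : MvPolynomial ι ℂ :=
  ∑ η ∈ D.Λ₁, C (c η) * D.num k η * D.codisc η * shiftP (toV η) p

lemma eval_discMulOp (hz : D.OffMirrors z) :
    eval z (D.discMulOp k c p) = eval z D.disc * D.opVal k c p z := by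
  simp only [discMulOp, opVal, map_sum, map_mul, eval_C, eval_shiftP, Finset.mul_sum]
  refine Finset.sum_congr rfl fun η _ => ?_
  have hsplit := congr(eval z $(D.den_mul_codisc η))
  rw [map_mul] at hsplit
  have hden : eval z (D.den η) ≠ 0 := left_ne_zero_of_mul (hsplit ▸ offMirrors_iff.mp hz)
  rw [← hsplit]
  field_simp

lemma IsOpImage.disc_mul_eq (hQ : D.IsOpImage k c p Q) : D.disc * Q = D.discMulOp k c p :=
  eq_of_forall_offMirrors fun z hz => by rw [map_mul, hQ z hz, eval_discMulOp hz]

lemma exists_isOpImage (hk : D.ΦInv k) (hc : D.Λ₁Inv c) (hp : D.WInv p) :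
    ∃ Q, D.IsOpImage k c p Q := by
  have hG : D.WInv (D.discMulOp k c p) := wInv_of_forall_offMirrors fun w hw z hz => by
    rw [eval_discMulOp (hz.actV hw), eval_discMulOp hz, eval_disc_actV hw, opVal_actV hk hc hp hw]
  obtain ⟨Q, hQ⟩ := prod_linP_dvd D.roots subset_rfl (fun _ => neg_mem_roots) fun β hβ =>
    hG.sq_linP_dvd hβ <| Finset.dvd_sum fun η _ => ((linP_dvd_codisc hβ η).mul_left _).mul_right _
  refine ⟨Q, fun z hz => mul_left_cancel₀ (offMirrors_iff.mp hz) ?_⟩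
  rw [← eval_discMulOp hz, hQ, map_mul, disc]

lemma IsOpImage.wInv (hQ : D.IsOpImage k c p Q) (hk : D.ΦInv k) (hc : D.Λ₁Inv c)
    (hp : D.WInv p) : D.WInv Q :=
  wInv_of_forall_offMirrors fun w hw z hz => by
    rw [hQ _ (hz.actV hw), hQ z hz, opVal_actV hk hc hp hw]

/-- The value at `e i` of axiom C5; by C7 all contributions to it are `0` or `1`. -/
lemma card_filter_pos_apply_le {i : ι} (hi : D.ell i = 1) :
    (D.Φ.filter (0 < · i)).card ≤ (D.roots.filter (0 < · i)).card + 1 := by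
  have hcard {A : Finset (ι → ℤ)} (hA : ∀ ω ∈ A, (∀ j, 0 ≤ ω j) ∨ ∀ j, ω j ≤ 0)
      (hA₁ : ∀ ω ∈ A, ω i = -1 ∨ ω i = 0 ∨ ω i = 1) :
      (∑ ω ∈ A with ∀ j, 0 ≤ ω j, ω) i = ((A.filter (0 < · i)).card : ℤ) := by
    rw [Finset.sum_apply, Finset.card_filter, Nat.cast_sum, Finset.sum_filter]
    refine Finset.sum_congr rfl fun ω hω => ?_
    rcases hA ω hω with hpos | hneg
    · have := hA₁ ω hω
      have := hpos i
      rw [if_pos hpos]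
      split_ifs <;> grind
    · have := hneg i
      rw [if_neg (not_lt.mpr this)]
      split_ifs with h
      · have := h i
        push_cast
        lia
      · rfl
  have hC5 := congrFun D.C5 i
  rw [Pi.sub_apply, hcard D.C3 fun ω hω => D.C7 i hi ω (.inr hω),
    hcard D.C2 fun ω hω => D.C7 i hi ω (.inl hω), hi] at hC5
  have := Finset.card_le_card (Finset.filter_subset_filter (0 < · i) D.Δ_subset_roots)
  lia

lemma card_filter_pairZ_le (hη : η ∈ D.Λ₁) :
    (D.Φ.filter (0 < pairZ · η)).card ≤ (D.roots.filter (0 < pairZ · η)).card + 1 := by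
  obtain ⟨w, hw, i, hi, rfl⟩ := (D.Λ₁_spec η).mp hη
  have hcard {A : Finset (ι → ℤ)} (hA : ∀ v ∈ D.W, ∀ ω ∈ A, v ω ∈ A) :
      (A.filter (0 < pairZ · (actDual w (e i)))).card = (A.filter (0 < · i)).card := by
    simp only [Finset.card_eq_sum_ones]
    exact (prod_filter_pairZ_actDual (M := Multiplicative ℕ) hA hw fun _ => .ofAdd 1).trans
      (by simp only [pairZ_e]; rfl)
  rw [hcard fun v hv ω hω => apply_mem_Φ hv hω, hcard fun v hv ω hω => apply_mem_roots hv hω]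
  exact card_filter_pos_apply_le hi

lemma totalDegree_num_le (hη : η ∈ D.Λ₁) :
    (D.num k η).totalDegree ≤ (D.den η).totalDegree + 1 := by
  have hden : (D.den η).totalDegree = (D.roots.filter (0 < pairZ · η)).card := by
    have hhom : (D.den η).IsHomogeneous (∑ β ∈ D.roots with 0 < pairZ β η, 1) :=
      IsHomogeneous.prod _ _ _ fun β _ => isHomogeneous_linP β
    rw [hhom.totalDegree (left_ne_zero_of_mul (D.den_mul_codisc η ▸ disc_ne_zero)),
      Finset.card_eq_sum_ones]
  have hnum : (D.num k η).totalDegree ≤ (D.Φ.filter (0 < pairZ · η)).card := by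
    refine (totalDegree_finsetProd _ _).trans ?_
    rw [Finset.card_eq_sum_ones]
    exact Finset.sum_le_sum fun ω _ =>
      (totalDegree_sub_C_le _ _).trans (isHomogeneous_linP ω).totalDegree_le
  have := card_filter_pairZ_le hη
  lia

/-- Dividing by `disc` raises the degree of `p - p(· - η)`, which is less than that of `p`, by at
most one. -/
lemma IsOpImage.totalDegree_mul_sub_le {Q₁ : MvPolynomial ι ℂ} (hQ₁ : D.IsOpImage k c 1 Q₁)
    (hQ : D.IsOpImage k c p Q) : (Q₁ * p - Q).totalDegree ≤ p.totalDegree := by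
  refine totalDegree_le_of_mul_eq_sum (s := D.Λ₁) (N := fun η => C (c η) * D.num k η)
    (q := fun η => p - shiftP (toV η) p) (D := D.den) (H := D.codisc)
    D.disc_ne_zero (fun η _ => D.den_mul_codisc η)
    (fun η hη => ?_) (fun η _ => mem_degreeLT_iff.mp (sub_shiftP_mem_degreeLT _ p)) ?_
  · refine (totalDegree_mul _ _).trans ?_
    rw [totalDegree_C, zero_add]
    exact totalDegree_num_le hη
  · rw [mul_sub, ← mul_assoc, hQ₁.disc_mul_eq, hQ.disc_mul_eq, discMulOp, discMulOp,
      Finset.sum_mul, ← Finset.sum_sub_distrib]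
    exact Finset.sum_congr rfl fun η _ => by rw [map_one]; ring

lemma IsOpImage.totalDegree_one_le (hQ : D.IsOpImage k c 1 Q) : Q.totalDegree ≤ 1 := by
  refine totalDegree_le_of_mul_eq_sum (s := D.Λ₁) (N := fun η => C (c η) * D.num k η)
    (q := fun _ => 1) (D := D.den) (H := D.codisc)
    D.disc_ne_zero (fun η _ => D.den_mul_codisc η)
    (fun η hη => ?_) (fun η _ => by simp) ?_
  · refine (totalDegree_mul _ _).trans ?_
    rw [totalDegree_C, zero_add]
    exact totalDegree_num_le hη
  · simp only [hQ.disc_mul_eq, discMulOp, map_one]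

end Data

namespace Data

variable {D : Data ι} {ρ a : ι → ℂ} {k c : (ι → ℤ) → ℂ} {p Q : MvPolynomial ι ℂ}
  {w : (ι → ℤ) ≃ₗ[ℤ] (ι → ℤ)} {η μ lam : ι → ℤ} {d : ℕ}

lemma InV0.exists_isK (hρ : D.InV0 ρ) : ∃ k, D.IsK ρ k := by
  refine ⟨fun ω => if h : ∃ i, ∃ w ∈ D.W, e i = w ω ∨ e i = -(w ω) then ρ h.choose else 0,
    fun ω i hi => ?_⟩
  have hex : ∃ i, ∃ w ∈ D.W, e i = w ω ∨ e i = -(w ω) := ⟨i, hi⟩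
  obtain ⟨v, hv, hvi⟩ := hi
  obtain ⟨u, hu, huω⟩ := hex.choose_spec
  simp only [dif_pos hex]
  refine hρ _ _ ⟨u * v⁻¹, mul_mem hu (inv_mem hv), ?_⟩
  have happly (x : ι → ℤ) : (u * v⁻¹) (v x) = u x := congr(u $(v.symm_apply_apply x))
  rcases huω with hu' | hu' <;> rcases hvi with hv' | hv' <;>
    simp only [hu', hv', map_neg, happly, neg_neg, true_or, or_true]

lemma IsK.apply_e (hk : D.IsK ρ k) (i : ι) : k (e i) = ρ i :=
  hk (e i) i ⟨1, one_mem _, .inl rfl⟩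

lemma IsK.apply_apply_e (hk : D.IsK ρ k) (hw : w ∈ D.W) (i : ι) : k (w (e i)) = ρ i :=
  hk _ i ⟨w⁻¹, inv_mem hw, .inl (w.symm_apply_apply (e i)).symm⟩

lemma IsK.ΦInv (hk : D.IsK ρ k) : D.ΦInv k := by
  intro w hw ω hω
  obtain ⟨v, hv, i, rfl⟩ := (D.Φ_spec ω).mp hω
  rw [hk.apply_apply_e hv]
  exact hk.apply_apply_e (mul_mem hw hv) i

lemma pairZ_ell_actDual (hw : w ∈ D.W) (η : ι → ℤ) :
    pairZ D.ell (actDual w η) = pairZ D.ell η := by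
  rw [pairZ_actDual]
  exact congr(pairZ $(D.C4 _ (inv_mem hw)) η)

lemma pairZ_ell_of_mem_Λ₁ (hη : η ∈ D.Λ₁) : pairZ D.ell η = 1 := by
  obtain ⟨w, hw, i, hi, rfl⟩ := (D.Λ₁_spec η).mp hη
  rw [pairZ_ell_actDual hw, pairZ_e, hi]

lemma pairZ_ell_sub_of_mem_Λ₁ (hη : η ∈ D.Λ₁) (μ : ι → ℤ) :
    pairZ D.ell (μ - η) = pairZ D.ell μ - 1 := by
  rw [pairZ_sub, pairZ_ell_of_mem_Λ₁ hη]

lemma apply_le_one_of_mem_Λ₁ (hη : η ∈ D.Λ₁) (j : ι) : η j ≤ 1 := by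
  obtain ⟨w, hw, i, hi, rfl⟩ := (D.Λ₁_spec η).mp hη
  have := D.C7 i hi _ (.inr (apply_mem_Φ (inv_mem hw) (e_mem_Φ j)))
  rw [← pairZ_e_left j (actDual w _), pairZ_actDual, pairZ_e]
  change w.symm (e j) i = -1 ∨ w.symm (e j) i = 0 ∨ w.symm (e j) i = 1 at this
  lia

lemma apply_le_pairZ_ell (hμ : μ ∈ LamPlus) (i : ι) : μ i ≤ pairZ D.ell μ :=
  calc μ i ≤ D.ell i * μ i := le_mul_of_one_le_left (hμ i) (D.C6 i)
    _ ≤ pairZ D.ell μ := Finset.single_le_sum (f := fun j => D.ell j * μ j)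
      (fun j _ => mul_nonneg (D.C6 j).le (hμ j)) (Finset.mem_univ i)

lemma pairZ_ell_nonneg (hμ : μ ∈ LamPlus) : 0 ≤ pairZ D.ell μ :=
  Finset.sum_nonneg fun i _ => mul_nonneg (D.C6 i).le (hμ i)

lemma eq_zero_of_pairZ_ell_nonpos (hμ : μ ∈ LamPlus) (h : pairZ D.ell μ ≤ 0) : μ = 0 :=
  funext fun i => ((apply_le_pairZ_ell hμ i).trans h).antisymm (hμ i)

lemma e_mem_LamPlus {κ : Type*} [DecidableEq κ] (i : κ) : e i ∈ LamPlus :=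
  Pi.le_def.mp (Pi.single_nonneg.mpr zero_le_one : 0 ≤ e i)

lemma eval_num_eq_zero (hk : D.IsK ρ k) (hη : η ∈ D.Λ₁) (hμ : μ ∈ LamPlus)
    (h : μ - η ∉ LamPlus) : eval (ρ + toV μ) (D.num k η) = 0 := by
  obtain ⟨j, hj⟩ := not_forall.mp h
  have := apply_le_one_of_mem_Λ₁ hη j
  have := hμ j
  rw [Pi.sub_apply] at hj
  have hμj : μ j = 0 := by lia
  rw [num, map_prod]
  refine Finset.prod_eq_zero (i := e j) (Finset.mem_filter.mpr ⟨e_mem_Φ j, ?_⟩) ?_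
  · rw [pairZ_e_left]
    lia
  · rw [map_sub, eval_linP, eval_C, evalC_e, hk.apply_e, Pi.add_apply, toV, hμj]
    simp

lemma opVal_eq_sum_filter (hk : D.IsK ρ k) (hμ : μ ∈ LamPlus) :
    D.opVal k c p (ρ + toV μ) = ∑ η ∈ D.Λ₁ with μ - η ∈ LamPlus,
      c η * (eval (ρ + toV μ) (D.num k η) / eval (ρ + toV μ) (D.den η)) *
        eval (ρ + toV (μ - η)) p := by
  rw [opVal, Finset.sum_filter]
  refine Finset.sum_congr rfl fun η hη => ?_
  split_ifs with h
  · rw [toV_sub, add_sub_assoc]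
  · rw [eval_num_eq_zero hk hη hμ h, zero_div, mul_zero, zero_mul]

lemma opVal_eq_zero (hk : D.IsK ρ k) (hμ : μ ∈ LamPlus)
    (h : ∀ η ∈ D.Λ₁, μ - η ∈ LamPlus → eval (ρ + toV (μ - η)) p = 0) :
    D.opVal k c p (ρ + toV μ) = 0 := by
  rw [opVal_eq_sum_filter hk hμ]
  refine Finset.sum_eq_zero fun η hη => ?_
  obtain ⟨hη, hη'⟩ := Finset.mem_filter.mp hη
  rw [h η hη hη', mul_zero]

lemma opVal_self (hk : D.IsK ρ k) : D.opVal k c p ρ = 0 := by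
  have h := opVal_eq_zero (c := c) (p := p) hk (μ := 0) (fun _ => le_rfl) fun η hη hη' => by
    have hnonneg := D.pairZ_ell_nonneg hη'
    rw [pairZ_ell_sub_of_mem_Λ₁ hη] at hnonneg
    simp [pairZ] at hnonneg
  rwa [toV_zero, add_zero] at h

lemma opVal_one_add_e (hk : D.IsK ρ k) {j : ι} (hj : D.ell j = 1) :
    D.opVal k c 1 (ρ + toV (e j)) =
      c (e j) * (eval (ρ + toV (e j)) (D.num k (e j)) / eval (ρ + toV (e j)) (D.den (e j))) := by
  rw [opVal_eq_sum_filter hk (e_mem_LamPlus j), Finset.sum_eq_single (e j), map_one, mul_one]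
  · intro η hη hne
    obtain ⟨hη, hη'⟩ := Finset.mem_filter.mp hη
    refine absurd (eq_zero_of_pairZ_ell_nonpos (D := D) hη' ?_) (sub_ne_zero.mpr hne.symm)
    rw [pairZ_ell_sub_of_mem_Λ₁ hη, pairZ_ell_of_mem_Λ₁ (e_mem_Λ₁ hj), sub_self]
  · intro hmem
    refine absurd (Finset.mem_filter.mpr ⟨e_mem_Λ₁ hj, ?_⟩) hmem
    rw [sub_self]
    exact fun _ => le_rfl

variable (D) in
/-- The linear function on `V` with coefficients `a` is `W`-invariant. -/
def InvFunctional (a : ι → ℂ) : Prop :=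
  ∀ w ∈ D.W, ∀ z : ι → ℂ, ∑ i, a i * actV w z i = ∑ i, a i * z i

lemma invFunctional_ell : D.InvFunctional (toV D.ell) := fun w hw z =>
  (evalC_actV D.ell w z).trans congr(evalC $(D.C4 _ (inv_mem hw)) z)

variable (D) in
/-- The nodes `ρ + μ` with `μ ∈ Λ₊`, `ℓ(μ) ≤ d`, determine the invariant polynomials of degree at
most `d`. -/
def Unisolvent (ρ : ι → ℂ) (d : ℕ) : Prop :=
  ∀ p : MvPolynomial ι ℂ, D.WInv p → p.totalDegree ≤ d →
    (∀ μ ∈ LamPlus, pairZ D.ell μ ≤ d → eval (ρ + toV μ) p = 0) → p = 0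

variable (D) in
/-- Genericity of `ρ`, with parameter function `k`, for interpolation in degree `d`: the operators
have no poles on `ρ + Λ₊`, their coefficients connecting `ρ + η` with `ρ`, `η ∈ Σ^∨₁`, do not
vanish, and interpolation is unique. -/
structure IsGeneric (ρ : ι → ℂ) (k : (ι → ℤ) → ℂ) (d : ℕ) : Prop where
  isK : D.IsK ρ k
  offMirrors : ∀ μ ∈ LamPlus, D.OffMirrors (ρ + toV μ)
  eval_num_ne_zero : ∀ j, D.ell j = 1 → eval (ρ + toV (e j)) (D.num k (e j)) ≠ 0
  unisolvent : D.Unisolvent ρ d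

lemma IsGeneric.exists_invFunctional (h : D.IsGeneric ρ k d) (hc : D.Λ₁Inv c)
    (hQ : D.IsOpImage k c 1 Q) :
    ∃ a, D.InvFunctional a ∧ (∀ z, eval z Q = ∑ i, a i * (z - ρ) i) ∧ ∀ j, D.ell j = 1 →
      a j = c (e j) *
        (eval (ρ + toV (e j)) (D.num k (e j)) / eval (ρ + toV (e j)) (D.den (e j))) := by
  obtain ⟨a₀, a, ha⟩ := exists_affine_of_totalDegree_le_one hQ.totalDegree_one_le
  have hinv : D.InvFunctional a := fun w hw z => by
    have := hQ.wInv h.isK.ΦInv hc (fun _ _ _ => by simp) w hw z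
    rwa [ha, ha, add_right_inj] at this
  have hρ : eval ρ Q = 0 := by
    have hoff := h.offMirrors 0 fun _ => le_rfl
    rw [toV_zero, add_zero] at hoff
    rw [hQ ρ hoff, opVal_self h.isK]
  have hQz (z : ι → ℂ) : eval z Q = ∑ i, a i * (z - ρ) i := by
    rw [← sub_zero (eval z Q), ← hρ, ha, ha, add_sub_add_left_eq_sub, ← Finset.sum_sub_distrib]
    simp only [Pi.sub_apply, mul_sub]
  refine ⟨a, hinv, hQz, fun j hj => ?_⟩
  rw [← opVal_one_add_e h.isK hj, ← hQ _ (h.offMirrors _ (e_mem_LamPlus j)), hQz]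
  simp [toV, e, Pi.single_apply]

/-- The unweighted operator maps `1` to `a(z - ρ)` for some invariant functional `a`; the weights
are the inverse values of `a` on `Λ₁`. -/
lemma IsGeneric.exists_weight (h : D.IsGeneric ρ k d) : ∃ c, D.Λ₁Inv c ∧ ∀ j, D.ell j = 1 →
    c (e j) * (eval (ρ + toV (e j)) (D.num k (e j)) / eval (ρ + toV (e j)) (D.den (e j))) = 1 := by
  have hone : D.Λ₁Inv 1 := fun _ _ _ _ => rfl
  obtain ⟨Q, hQ⟩ := exists_isOpImage h.isK.ΦInv hone (p := 1) fun _ _ _ => by simp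
  obtain ⟨a, hinv, -, ha⟩ := h.exists_invFunctional hone hQ
  refine ⟨fun η => (∑ i, a i * toV η i)⁻¹, fun w hw η _ => ?_, fun j hj => ?_⟩
  · simp only [toV_actDual, hinv w hw]
  · have haj : ∑ i, a i * toV (e j) i = a j := by simp [toV, e, Pi.single_apply]
    have hden : eval (ρ + toV (e j)) (D.den (e j)) ≠ 0 := by
      have := offMirrors_iff.mp (h.offMirrors _ (e_mem_LamPlus j))
      rw [← D.den_mul_codisc (e j), map_mul] at this
      exact left_ne_zero_of_mul this
    simp only [haj, ha j hj, Pi.one_apply, one_mul]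
    exact inv_mul_cancel₀ (div_ne_zero (h.eval_num_ne_zero j hj) hden)

lemma IsGeneric.exists_isOpImage_one (h : D.IsGeneric ρ k d) :
    ∃ c Q, D.Λ₁Inv c ∧ D.IsOpImage k c 1 Q ∧ ∀ z, eval z Q = evalC D.ell (z - ρ) := by
  obtain ⟨c, hc, hcj⟩ := h.exists_weight
  obtain ⟨Q, hQ⟩ := exists_isOpImage h.isK.ΦInv hc (p := 1) fun _ _ _ => by simp
  obtain ⟨a, hinv, hQz, ha⟩ := h.exists_invFunctional hc hQ
  have hell : a = toV D.ell := D.C8 a _ hinv invFunctional_ell fun i hi => by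
    rw [ha i hi, hcj i hi, toV, hi, Int.cast_one]
  exact ⟨c, Q, hc, hQ, fun z => by rw [hQz, hell]; rfl⟩

/-- Both sides differ by an invariant polynomial of degree at most `ℓ(λ)` which vanishes at all
nodes. -/
lemma IsGeneric.exists_eigenvalue_equation (h : D.IsGeneric ρ k d) (hp : D.CapelliAt ρ lam p)
    (hd : pairZ D.ell lam = d) : ∃ c, ∀ μ ∈ LamPlus,
      ((pairZ D.ell μ - d : ℤ) : ℂ) * eval (ρ + toV μ) p = D.opVal k c p (ρ + toV μ) := by
  obtain ⟨c, Q₁, hc, hQ₁, hQ₁z⟩ := h.exists_isOpImage_one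
  obtain ⟨hpW, hpdeg, hpval⟩ := hp
  obtain ⟨Q, hQ⟩ := exists_isOpImage h.isK.ΦInv hc hpW
  rw [hd] at hpdeg hpval
  have hvalue (μ : ι → ℤ) (hμ : μ ∈ LamPlus) : eval (ρ + toV μ) (Q₁ * p - Q - C (d : ℂ) * p) =
      ((pairZ D.ell μ - d : ℤ) : ℂ) * eval (ρ + toV μ) p - D.opVal k c p (ρ + toV μ) := by
    simp only [map_sub, map_mul, eval_C, hQ₁z, hQ _ (h.offMirrors μ hμ), add_sub_cancel_left,
      evalC_toV]
    push_cast
    ring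
  have hzero : Q₁ * p - Q - C (d : ℂ) * p = 0 := by
    refine h.unisolvent _ (fun w hw z => ?_) ?_ fun μ hμ hμd => ?_
    · have hQ₁W := hQ₁.wInv h.isK.ΦInv hc fun _ _ _ => by simp
      simp only [map_sub, map_mul, eval_C, hQ₁W w hw, hQ.wInv h.isK.ΦInv hc hpW w hw, hpW w hw]
    · refine (totalDegree_sub _ _).trans (max_le ?_ ?_)
      · exact (hQ₁.totalDegree_mul_sub_le hQ).trans (by exact_mod_cast hpdeg)
      · rw [C_mul']
        exact (totalDegree_smul_le _ _).trans (by exact_mod_cast hpdeg)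
    · have hop : D.opVal k c p (ρ + toV μ) = 0 := by
        refine opVal_eq_zero h.isK hμ fun η hη hη' => ?_
        have hell := pairZ_ell_sub_of_mem_Λ₁ hη μ
        rw [hpval _ hη' (by lia), if_neg]
        rintro rfl
        lia
      rw [hvalue μ hμ, hop, hpval μ hμ hμd]
      split_ifs with hμlam
      · simp [hμlam, hd]
      · simp
  refine ⟨c, fun μ hμ => sub_eq_zero.mp ?_⟩
  rw [← hvalue μ hμ, hzero, map_zero]

theorem IsGeneric.eval_eq_zero (h : D.IsGeneric ρ k d) (hp : D.CapelliAt ρ lam p)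
    (hd : pairZ D.ell lam = d) (hμ : μ ∈ LamPlus) (hnot : μ - lam ∉ D.Lam) :
    eval (ρ + toV μ) p = 0 := by
  obtain ⟨c, hc⟩ := h.exists_eigenvalue_equation hp hd
  induction hn : (pairZ D.ell μ).toNat using Nat.strong_induction_on generalizing μ with
  | _ n ih =>
    by_cases hle : pairZ D.ell μ ≤ d
    · rw [hp.2.2 μ hμ (hle.trans hd.ge), if_neg]
      rintro rfl
      exact hnot (sub_self μ ▸ zero_mem _)
    have hop : D.opVal k c p (ρ + toV μ) = 0 := by
      refine opVal_eq_zero h.isK hμ fun η hη hη' => ?_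
      have hnonneg := D.pairZ_ell_nonneg hη'
      have hell := pairZ_ell_sub_of_mem_Λ₁ hη μ
      have hnot' : μ - η - lam ∉ D.Lam := fun hmem => hnot <| by
        have hadd := add_mem (AddSubmonoid.subset_closure hη) hmem
        rwa [← add_sub_assoc, add_sub_cancel] at hadd
      exact ih _ (by lia) hη' hnot' rfl
    have hne : ((pairZ D.ell μ - d : ℤ) : ℂ) ≠ 0 := by
      exact_mod_cast (sub_pos.mpr (not_le.mp hle)).ne'
    exact (mul_eq_zero.mp ((hc μ hμ).trans hop)).resolve_left hne

end Data

namespace Data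

variable (D : Data ι) {ρ : ι → ℂ} {d : ℕ}

/-- The elements of `Λ₊` of level at most `d`. -/
def nodes (d : ℕ) : Set (ι → ℤ) := {μ | μ ∈ LamPlus ∧ pairZ D.ell μ ≤ d}

/-- The invariant polynomials of degree at most `d`. -/
def invDegreeLE (d : ℕ) : Submodule ℂ (MvPolynomial ι ℂ) where
  carrier := {p | D.WInv p ∧ p.totalDegree ≤ d}
  zero_mem' := ⟨fun _ _ _ => by simp, by simp⟩
  add_mem' hp hq := ⟨fun w hw z => by rw [map_add, map_add, hp.1 w hw, hq.1 w hw],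
    (totalDegree_add _ _).trans (max_le hp.2 hq.2)⟩
  smul_mem' a _ hp := ⟨fun w hw z => by rw [smul_eval, smul_eval, hp.1 w hw],
    (totalDegree_smul_le a _).trans hp.2⟩

/-- Evaluation of invariant polynomials of degree at most `d` at the points `ρ + μ`. -/
def evalNodes (ρ : ι → ℂ) (d : ℕ) : D.invDegreeLE d →ₗ[ℂ] D.nodes d → ℂ where
  toFun p μ := eval (ρ + toV (μ : ι → ℤ)) (p : MvPolynomial ι ℂ)
  map_add' _ _ := funext fun _ => map_add _ _ _
  map_smul' _ _ := funext fun _ => smul_eval _ _ _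

instance finite_nodes : Finite (D.nodes d) := by
  refine Set.Finite.subset (Set.finite_Icc (0 : ι → ℤ) fun _ => d) fun μ hμ => ⟨hμ.1, fun i => ?_⟩
  exact (apply_le_pairZ_ell hμ.1 i).trans hμ.2

noncomputable instance fintypeNodes : Fintype (D.nodes d) := Fintype.ofFinite _

variable {D}

lemma unisolvent_iff_injective : D.Unisolvent ρ d ↔ Function.Injective (D.evalNodes ρ d) := by
  rw [injective_iff_map_eq_zero]
  constructor
  · exact fun h p hp => Subtype.ext <|
      h p p.2.1 p.2.2 fun μ hμ hμd => congrFun hp ⟨μ, hμ, hμd⟩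
  · exact fun h p hpW hpd hp => congrArg Subtype.val <|
      h ⟨p, hpW, hpd⟩ (funext fun μ => hp μ μ.2.1 μ.2.2)

lemma evalNodes_surjective (hex : ∀ lam ∈ D.nodes d, ∃ p, D.CapelliAt ρ lam p) :
    Function.Surjective (D.evalNodes ρ d) := by
  rw [← LinearMap.range_eq_top]
  refine eq_top_of_triangular (fun μ : D.nodes d => pairZ D.ell μ) fun lam => ?_
  obtain ⟨p, hpW, hpdeg, hp⟩ := hex lam lam.2
  have hpd : p.totalDegree ≤ d := by exact_mod_cast hpdeg.trans lam.2.2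
  refine ⟨_, ⟨⟨p, hpW, hpd⟩, rfl⟩, fun μ hμ => ?_⟩
  simp only [Subtype.ext_iff]
  exact hp μ μ.2.1 hμ

variable (D) in
lemma exists_pairZ_ell_eq [Nonempty ι] (n : ℕ) : ∃ μ ∈ LamPlus, pairZ D.ell μ = n := by
  obtain ⟨i, hi⟩ : ∃ i, D.ell i = 1 := by
    by_contra! hne
    have h0 := D.C8 (toV D.ell) 0 D.invFunctional_ell (fun _ _ _ => by simp)
      fun i hi => absurd hi (hne i)
    obtain ⟨i⟩ := ‹Nonempty ι›
    have hi0 : (D.ell i : ℂ) = 0 := congrFun h0 i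
    exact (D.C6 i).ne' (Int.cast_eq_zero.mp hi0)
  refine ⟨(n : ℤ) • e i, fun j => mul_nonneg n.cast_nonneg (e_mem_LamPlus i j), ?_⟩
  exact (dotProduct_smul (n : ℤ) D.ell (e i)).trans (by
    rw [show D.ell ⬝ᵥ e i = 1 from (pairZ_e D.ell i).trans hi, smul_eq_mul, mul_one])

/-- If `q` lies in the kernel, `p ± q` solves the same interpolation problem as the Capelli
polynomial `p` of degree `deg q`, and at least one of them has the same degree. -/
lemma unisolvent_of_existsUnique (h : ∀ lam ∈ LamPlus, ∃! p, D.WInv p ∧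
      p.totalDegree = (pairZ D.ell lam).toNat ∧
      ∀ μ : ι → ℤ, μ ∈ LamPlus → pairZ D.ell μ ≤ pairZ D.ell lam →
        eval (ρ + toV μ) p = if μ = lam then 1 else 0) (d : ℕ) : D.Unisolvent ρ d := by
  intro q hqW hqd hq
  rcases isEmpty_or_nonempty ι with hι | hι
  · have hq0 := hq 0 (fun _ => le_rfl) (by simp [pairZ])
    rw [eq_C_of_isEmpty q, eval_C] at hq0
    rw [eq_C_of_isEmpty q, hq0, map_zero]
  obtain ⟨lam, hlam, hell⟩ := D.exists_pairZ_ell_eq q.totalDegree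
  obtain ⟨p, ⟨hpW, hpdeg, hp⟩, huniq⟩ := h lam hlam
  rw [hell, Int.toNat_natCast] at hpdeg huniq
  have hq' (μ : ι → ℤ) (hμ : μ ∈ LamPlus) (hle : pairZ D.ell μ ≤ q.totalDegree) :
      eval (ρ + toV μ) q = 0 := hq μ hμ (hle.trans (by exact_mod_cast hqd))
  rw [hell] at hp
  rcases totalDegree_add_eq_or_sub_eq hpdeg.le with hdeg | hdeg
  · refine add_eq_left.mp (huniq (p + q) ⟨fun w hw z => ?_, hdeg, fun μ hμ hle => ?_⟩)
    · rw [map_add, map_add, hpW w hw, hqW w hw]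
    · rw [map_add, hp μ hμ hle, hq' μ hμ hle, add_zero]
  · refine sub_eq_self.mp (huniq (p - q) ⟨fun w hw z => ?_, hdeg, fun μ hμ hle => ?_⟩)
    · rw [map_sub, map_sub, hpW w hw, hqW w hw]
    · rw [map_sub, hp μ hμ hle, hq' μ hμ hle, sub_zero]

lemma C0.exists_capelliAt (h : D.C0) : ∃ ρ, D.InV0 ρ ∧ (∀ d, D.Unisolvent ρ d) ∧
    ∀ lam ∈ LamPlus, ∃ p, D.CapelliAt ρ lam p := by
  obtain ⟨ρ, hV0, -, -, hρ⟩ := h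
  refine ⟨ρ, hV0, unisolvent_of_existsUnique hρ, fun lam hlam => ?_⟩
  obtain ⟨p, ⟨hpW, hpdeg, hp⟩, -⟩ := hρ lam hlam
  refine ⟨p, hpW, ?_, hp⟩
  rw [hpdeg, Int.toNat_of_nonneg (D.pairZ_ell_nonneg hlam)]

/-- C0 determines the dimension of `D.invDegreeLE d`, so surjectivity suffices for every `ρ`. -/
lemma C0.evalNodes_bijective (h : D.C0) (hex : ∀ lam ∈ D.nodes d, ∃ p, D.CapelliAt ρ lam p) :
    Function.Bijective (D.evalNodes ρ d) := by
  obtain ⟨ρ', -, huniq, hex'⟩ := h.exists_capelliAt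
  have equiv := LinearEquiv.ofBijective (D.evalNodes ρ' d)
    ⟨unisolvent_iff_injective.mp (huniq d), evalNodes_surjective fun lam hlam => hex' lam hlam.1⟩
  have : FiniteDimensional ℂ (D.invDegreeLE d) := equiv.symm.finiteDimensional
  have hsurj := evalNodes_surjective hex
  exact ⟨(LinearMap.injective_iff_surjective_of_finrank_eq_finrank equiv.finrank_eq).mpr hsurj,
    hsurj⟩

end Data

lemma exists_eq_e_of_nonneg_of_sum_eq_one {κ : Type*} [Fintype κ] [DecidableEq κ] {x : κ → ℤ}
    (hx : 0 ≤ x) (hsum : ∑ i, x i = 1) : ∃ j, x = e j := by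
  obtain ⟨j, -, hj⟩ := Finset.exists_ne_zero_of_sum_ne_zero (hsum.trans_ne one_ne_zero)
  have hle : e j ≤ x := fun i => by
    have := hx i
    rw [Pi.zero_apply] at this
    rw [e, Pi.single_apply]
    split_ifs with hij
    · subst hij
      lia
    · exact this
  have hdiff : x - e j = 0 := by
    refine (Fintype.sum_eq_zero_iff_of_nonneg (sub_nonneg.mpr hle)).mp ?_
    simp [hsum, e]
  exact ⟨j, sub_eq_zero.mp hdiff⟩

namespace Data

variable {D : Data ι} {ρ : ι → ℂ} {k : (ι → ℤ) → ℂ} {d : ℕ} {p : MvPolynomial ι ℂ}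
  {s : (ι → ℤ) ≃ₗ[ℤ] (ι → ℤ)} {lam μ ω β : ι → ℤ}

open Filter

lemma exists_eq_e_of_mem_Φ (hω : ω ∈ D.Φ) (hsum : ∑ i, ω i = 1) : ∃ j, ω = e j := by
  rcases D.C3 ω hω with hpos | hneg
  · exact exists_eq_e_of_nonneg_of_sum_eq_one hpos hsum
  · have := Finset.sum_nonpos fun i (_ : i ∈ Finset.univ) => hneg i
    lia

lemma CapelliAt.actDual_eq (hp : D.CapelliAt ρ lam p) (hs : s ∈ D.W) (hfix : actV s ρ = ρ)
    (hlam : lam ∈ LamPlus) (hmem : actDual s lam ∈ LamPlus) : actDual s lam = lam := by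
  obtain ⟨hpW, -, hp⟩ := hp
  by_contra hne
  have h := hpW s hs (ρ + toV lam)
  rw [actV_add, hfix, ← toV_actDual, hp _ hmem (pairZ_ell_actDual hs lam).le,
    hp _ hlam le_rfl, if_neg hne, if_pos rfl] at h
  exact zero_ne_one h

/-- A reflection in a root of coordinate sum zero would permute `Σ`, hence fix `ρ`, and the Capelli
polynomials of the basis vectors would not separate the points `ρ + η`, `η ∈ Σ^∨`. -/
lemma InV0.sum_ne_zero_of_mem_roots (hρ : D.InV0 ρ) (hex : ∀ i, ∃ p, D.CapelliAt ρ (e i) p)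
    (hβ : β ∈ D.roots) : ∑ i, β i ≠ 0 := by
  intro hsum
  obtain ⟨s, hs, c, hc, hsx⟩ := exists_reflection hβ
  have hs' : s.symm ∈ D.W := inv_mem hs
  have hperm (i : ι) : ∃ j, s.symm (e i) = e j := by
    refine exists_eq_e_of_mem_Φ (apply_mem_Φ hs' (e_mem_Φ i)) ?_
    simp [hsx, ← Finset.mul_sum, hsum, e]
  have hfix : actV s ρ = ρ := by
    ext i
    obtain ⟨j, hj⟩ := hperm i
    rw [actV, hj, evalC_e]
    exact hρ j i ⟨_, hs', .inl hj.symm⟩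
  have hact (i : ι) : actDual s (e i) = e i := by
    obtain ⟨p, hp⟩ := hex i
    refine hp.actDual_eq hs hfix (e_mem_LamPlus i) fun l => ?_
    obtain ⟨j, hj⟩ := hperm l
    rw [actDual, hj, pairZ_e_left]
    exact e_mem_LamPlus i j
  refine ne_zero_of_mem_roots hβ (funext fun i => ?_)
  have hneg : β i = pairZ (s.symm β) (e i) := by
    rw [← pairZ_e β i, ← congrArg (pairZ β) (hact i), pairZ_actDual]
  rw [pairZ_e, hsx, hc, Pi.sub_apply, Pi.smul_apply, smul_eq_mul] at hneg
  rw [Pi.zero_apply]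
  lia

lemma C0.sum_ne_zero_of_mem_roots (h : D.C0) (hβ : β ∈ D.roots) : ∑ i, β i ≠ 0 := by
  obtain ⟨ρ, hρ, -, hex⟩ := h.exists_capelliAt
  exact hρ.sum_ne_zero_of_mem_roots (fun i => hex _ (e_mem_LamPlus i)) hβ

lemma IsK.add_smul_one (hk : D.IsK ρ k) (t : ℂ) : D.IsK (ρ + t • 1) fun ω => k ω + t :=
  fun ω i h => by simp [hk ω i h]

lemma eventually_offMirrors (hroots : ∀ β ∈ D.roots, ∑ i, β i ≠ 0) (ρ : ι → ℂ) :
    ∀ᶠ t : ℂ in cocountable, ∀ μ ∈ LamPlus, D.OffMirrors (ρ + t • 1 + toV μ) := by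
  refine eventually_countable_forall.mpr fun μ => eventually_imp_distrib_left.mpr fun _ => ?_
  refine (eventually_all_finset _).mpr fun β hβ => ?_
  have hne := eventually_add_mul_ne_zero (a := evalC β (ρ + toV μ)) (b := evalC β 1) fun h0 =>
    absurd (Int.cast_eq_zero.mp (evalC_one β ▸ h0)) (hroots β hβ)
  refine hne.mono fun t ht => ?_
  rwa [add_right_comm, evalC_add, evalC_smul]

lemma IsK.eventually_eval_num_ne_zero (hk : D.IsK ρ k) : ∀ᶠ t : ℂ in cocountable, ∀ j,
    eval (ρ + t • 1 + toV (e j)) (D.num (fun ω => k ω + t) (e j)) ≠ 0 := by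
  refine eventually_all.mpr fun j => ?_
  simp only [num, map_prod, Finset.prod_ne_zero_iff]
  refine (eventually_all_finset _).mpr fun ω hω => ?_
  obtain ⟨hω, hωj⟩ := Finset.mem_filter.mp hω
  rw [pairZ_e] at hωj
  have hne := eventually_add_mul_ne_zero (K := ℂ) (a := evalC ω ρ + ω j - k ω)
    (b := ((∑ i, ω i - 1 : ℤ) : ℂ)) fun hb => by
      obtain ⟨i, rfl⟩ := exists_eq_e_of_mem_Φ hω (sub_eq_zero.mp (Int.cast_eq_zero.mp hb))
      rw [evalC_e, hk.apply_e, add_sub_cancel_left, Int.cast_ne_zero]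
      exact hωj.ne'
  refine hne.mono fun t ht => ?_
  convert ht using 1
  rw [map_sub, eval_linP, eval_C, evalC_add, evalC_add, evalC_smul, evalC_one, evalC_toV, pairZ_e]
  push_cast
  ring

section Interpolation

open Matrix

variable (h : Function.Bijective (D.evalNodes ρ d))

/-- The invariant polynomial of degree at most `d` with prescribed values at the points `ρ + μ`. -/
def interpolate : (D.nodes d → ℂ) ≃ₗ[ℂ] D.invDegreeLE d :=
  (LinearEquiv.ofBijective (D.evalNodes ρ d) h).symm

/-- Evaluation of interpolating polynomials along the line `t ↦ z + t • 1`, as a vector of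
polynomials in `t`: its pairing with `x` is the value of `interpolate h x` at `z + t • 1`. -/
def lineFunctional (z : ι → ℂ) (ν : D.nodes d) : Polynomial ℂ :=
  lineP z 1 (interpolate h (Pi.single ν 1) : MvPolynomial ι ℂ)

/-- The matrix, with entries polynomial in `t`, of `D.evalNodes (ρ + t • 1) d ∘ interpolate h`. -/
def evalMatrix : Matrix (D.nodes d) (D.nodes d) (Polynomial ℂ) :=
  Matrix.of fun μ => lineFunctional h (ρ + toV (μ : ι → ℤ))

lemma interpolate_evalNodes (p : D.invDegreeLE d) : interpolate h (D.evalNodes ρ d p) = p :=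
  LinearEquiv.ofBijective_symm_apply_apply (D.evalNodes ρ d) p

lemma lineFunctional_dotProduct (z : ι → ℂ) (t : ℂ) (x : D.nodes d → ℂ) :
    (Polynomial.eval t ∘ lineFunctional h z) ⬝ᵥ x =
      eval (z + t • 1) (interpolate h x : MvPolynomial ι ℂ) := by
  conv_rhs => rw [pi_eq_sum_univ' x]
  simp only [map_sum, map_smul, Submodule.coe_sum, Submodule.coe_smul, smul_eval, dotProduct,
    Function.comp_apply, lineFunctional, eval_lineP, mul_comm]

lemma evalMatrix_mulVec (t : ℂ) (x : D.nodes d → ℂ) :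
    (evalMatrix h).map (Polynomial.eval t) *ᵥ x =
      D.evalNodes (ρ + t • 1) d (interpolate h x) := by
  ext μ
  refine (lineFunctional_dotProduct h _ t x).trans ?_
  rw [add_right_comm]
  rfl

lemma eval_det_evalMatrix_ne_zero_iff {t : ℂ} :
    (evalMatrix h).det.eval t ≠ 0 ↔ D.Unisolvent (ρ + t • 1) d := by
  rw [eval_det_eq, ← isUnit_iff_ne_zero, ← isUnit_iff_isUnit_det, ← mulVec_injective_iff_isUnit,
    unisolvent_iff_injective, ← (interpolate h).injective_comp]
  exact iff_of_eq congr(Function.Injective $(funext (evalMatrix_mulVec h t)))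

lemma eval_zero_det_evalMatrix_ne_zero : (evalMatrix h).det.eval 0 ≠ 0 := by
  rw [eval_det_evalMatrix_ne_zero_iff, zero_smul, add_zero]
  exact unisolvent_iff_injective.mpr h.injective

lemma eventually_unisolvent (hρ : Function.Bijective (D.evalNodes ρ d)) :
    ∀ᶠ t : ℂ in cocountable, D.Unisolvent (ρ + t • 1) d := by
  have hdet : (evalMatrix hρ).det ≠ 0 := fun h0 =>
    eval_zero_det_evalMatrix_ne_zero hρ (by rw [h0, Polynomial.eval_zero])
  exact (eventually_eval_ne_zero hdet).mono fun _ => (eval_det_evalMatrix_ne_zero_iff hρ).mp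

lemma IsK.eventually_isGeneric (hk : D.IsK ρ k) (hρ : Function.Bijective (D.evalNodes ρ d))
    (hroots : ∀ β ∈ D.roots, ∑ i, β i ≠ 0) :
    ∀ᶠ t : ℂ in cocountable, D.IsGeneric (ρ + t • 1) (fun ω => k ω + t) d := by
  filter_upwards [eventually_offMirrors hroots ρ, hk.eventually_eval_num_ne_zero,
    eventually_unisolvent hρ] with t hoff hnum huniq
  exact ⟨hk.add_smul_one t, hoff, fun j _ => hnum j, huniq⟩

lemma capelliAt_iff_evalNodes_eq {ν : D.nodes d} (hd : pairZ D.ell ν = d) {p : D.invDegreeLE d} :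
    D.CapelliAt ρ ν p ↔ D.evalNodes ρ d p = Pi.single ν 1 := by
  have hdeg : ((p : MvPolynomial ι ℂ).totalDegree : ℤ) ≤ d := by exact_mod_cast p.2.2
  rw [CapelliAt, hd, and_iff_right p.2.1, and_iff_right hdeg, funext_iff]
  refine ⟨fun h μ => ?_, fun h μ hμ hμd => ?_⟩
  · refine (h μ μ.2.1 μ.2.2).trans ?_
    simp only [Pi.single_apply, Subtype.ext_iff]
  · refine (h ⟨μ, hμ, hμd⟩).trans ?_
    simp only [Pi.single_apply, Subtype.ext_iff]

end Interpolation

end Data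

instance uncountable_complex : Uncountable ℂ := Complex.ofReal_injective.uncountable

open Data in
/-- The value at `ρ + t • 1 + μ` of the Capelli polynomial with shift `ρ + t • 1` is a rational
function of `t` without pole at `0`, and it vanishes for all generic `t`. -/
theorem statement8_general {D : Data ι} {ρ : ι → ℂ} {lam μ : ι → ℤ} {p : MvPolynomial ι ℂ}
    (hC0 : D.C0) (hρ : D.InV0 ρ)
    (hex : ∀ ν ∈ LamPlus, pairZ D.ell ν ≤ pairZ D.ell lam → ∃ q, D.CapelliAt ρ ν q)
    (hp : D.CapelliAt ρ lam p) (hlam : lam ∈ LamPlus) (hμ : μ ∈ LamPlus)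
    (hnot : μ - lam ∉ D.Lam) : eval (ρ + toV μ) p = 0 := by
  obtain ⟨d, hd⟩ := Int.eq_ofNat_of_zero_le (D.pairZ_ell_nonneg hlam)
  have hbij : Function.Bijective (D.evalNodes ρ d) :=
    hC0.evalNodes_bijective fun ν hν => hex ν hν.1 (hν.2.trans hd.ge)
  obtain ⟨k, hk⟩ := hρ.exists_isK
  have hgeneric := infinite_of_eventually_cocountable <|
    hk.eventually_isGeneric hbij fun β hβ => hC0.sum_ne_zero_of_mem_roots hβ
  let ν : D.nodes d := ⟨lam, hlam, hd.le⟩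
  lift p to D.invDegreeLE d using ⟨hp.1, by exact_mod_cast hp.2.1.trans hd.le⟩
  have hvanish := dotProduct_eq_zero_of_infinite (A := evalMatrix hbij)
    (ψ := lineFunctional hbij (ρ + toV μ)) (f := Pi.single ν 1) hgeneric (fun t ht x hx => ?_)
    (eval_zero_det_evalMatrix_ne_zero hbij) (x := D.evalNodes ρ d p) ?_
  · rwa [lineFunctional_dotProduct, interpolate_evalNodes, zero_smul, add_zero] at hvanish
  · rw [evalMatrix_mulVec] at hx
    rw [lineFunctional_dotProduct, add_right_comm]
    exact ht.eval_eq_zero ((capelliAt_iff_evalNodes_eq (ν := ν) hd).mpr hx) hd hμ hnot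
  · rw [evalMatrix_mulVec, interpolate_evalNodes, zero_smul, add_zero]
    exact (capelliAt_iff_evalNodes_eq (ν := ν) hd).mp hp

/-- Corollary 2.9, extra vanishing: assuming axiom C0, for
dominant `ρ ∈ V₀` and `λ, μ ∈ Λ₊` with `μ - λ ∉ Λ` (the monoid generated by
`Λ₁`), one has `p_λ(ρ+μ) = 0`. -/
theorem statement8 (D : Data ι) (hC0 : D.C0)
    (ρ : ι → ℂ) (hρ : D.InV0 ρ) (hdom : D.Dominant ρ)
    (pl : (ι → ℤ) → MvPolynomial ι ℂ)
    (hpl : ∀ lam : ι → ℤ, lam ∈ LamPlus → D.CapelliAt ρ lam (pl lam))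
    (lam μ : ι → ℤ) (hlam : lam ∈ LamPlus) (hμ : μ ∈ LamPlus)
    (hnot : μ - lam ∉ D.Lam) :
    eval (ρ + toV μ) (pl lam) = 0 :=
  statement8_general hC0 hρ (fun ν hν _ => ⟨pl ν, hpl ν hν⟩) (hpl lam hlam) hlam hμ hnot

end Knop

end
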